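/- arXiv:1612.06618 — 2 statements merged into one kernel-verified Lean document; each statement's English description precedes it below -/
import Mathlib

section
/- Fix ν > 0, and set c₁ = (ν²−1)/24 and c₂ = (ν²−1)(ν²+23)/1152. Then as λ → ∞, Z(λ,ν) = exp(ν·λ^(1/ν)) / (λ^((ν-1)/(2ν)) · (2π)^((ν-1)/2) · √ν) · (1 + c₁·(ν·λ^(1/ν))^(−1) + c₂·(ν·λ^(1/ν))^(−2) + O(λ^(−3/ν))). Precisely: there exist constants C > 0 and Λ > 0 (depending only on ν) such that for all λ ≥ Λ, |Z(λ,ν) · λ^((ν-1)/(2ν)) · (2π)^((ν-1)/2) · √ν · exp(−ν·λ^(1/ν)) − (1 + c₁·(ν·λ^(1/ν))^(−1) + c₂·(ν·λ^(1/ν))^(−2))| ≤ C·λ^(−3/ν). -/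
open scoped BigOperators

/-- The Conway-Maxwell-Poisson normalizing constant `Z(λ,ν) = ∑_{i=0}^∞ λ^i/(i!)^ν`. -/
noncomputable def cmpZ (lam nu : ℝ) : ℝ := ∑' i : ℕ, lam ^ i / (i.factorial : ℝ) ^ nu

/-!
Substitute `λ = x ^ ν`. The CMP weights are then, up to a common factor, the `ν`-th powers of the
Poisson probabilities of mean `x`, so the local central limit theorem, dominated by an exponential
tail bound, gives the leading asymptotics of the normalizing constant and shows that the relative
deviation `D = i / x - 1` satisfies `E|D| ^ n = O(x ^ (-n / 2))`.

The weights satisfy the Stein identity `E[(1 + D) ^ ν * g i] = E[g (i + 1)]`. Taking `g i = D ^ k`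
and expanding `(1 + D) ^ ν` in its binomial series gives linear equations between the moments
`E[D ^ l]` in which each moment is determined, up to one more power of `1 / x`, by the higher ones.
Explicit polynomials in `1 / x` that solve these equations modulo `x ^ (-4)` therefore agree with
the moments to that order. Since `d/dx log Z = ν * (1 + E[D])`, integrating from infinity and
exponentiating gives the expansion.
-/

open Filter Asymptotics MeasureTheory Topology Finset
open InformationTheory (klFun klFun_nonneg klFun_apply)
open scoped Nat

lemma mul_sub_exp_sub_one_le_klFun (θ : ℝ) {y : ℝ} (hy : 0 ≤ y) :
    θ * y - (Real.exp θ - 1) ≤ klFun y := by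
  rcases hy.eq_or_lt with rfl | hy
  · simpa [klFun_apply] using (Real.exp_pos θ).le
  have h := mul_nonneg (Real.exp_pos θ).le (klFun_nonneg (by positivity : 0 ≤ y * Real.exp (-θ)))
  rw [klFun_apply, Real.log_mul hy.ne' (Real.exp_ne_zero _), Real.log_exp, Real.exp_neg] at h
  have he := Real.exp_ne_zero θ
  field_simp at h
  rw [klFun_apply]
  linarith

lemma abs_sub_div_sqrt_sub_one_le_mul_klFun {x y : ℝ} (hx : 1 ≤ x) (hy : 0 ≤ y) :
    |y - x| / √x - 1 ≤ x * klFun (y / x) := by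
  have hx0 : 0 < x := by linarith
  have fenchel_young (θ : ℝ) (hθ : |θ| = (√x)⁻¹) : θ * (y - x) - 1 ≤ x * klFun (y / x) := by
    have hexp := (abs_le.1 (Real.abs_exp_sub_one_sub_id_le
      (hθ.trans_le (inv_le_one_of_one_le₀ (Real.one_le_sqrt.2 hx))))).2
    have hsq : x * θ ^ 2 = 1 := by
      rw [← sq_abs, hθ, inv_pow, Real.sq_sqrt hx0.le, mul_inv_cancel₀ hx0.ne']
    calc θ * (y - x) - 1 = x * (θ * (y / x)) - x * θ - x * θ ^ 2 := by rw [hsq]; field_simp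
      _ ≤ x * (θ * (y / x) - (Real.exp θ - 1)) := by nlinarith
      _ ≤ x * klFun (y / x) := by
        gcongr; exact mul_sub_exp_sub_one_le_klFun θ (by positivity)
  have hs : 0 ≤ (√x)⁻¹ := by positivity
  rw [div_eq_inv_mul]
  rcases abs_cases (y - x) with ⟨h, _⟩ | ⟨h, _⟩ <;> rw [h]
  · exact fenchel_young _ (abs_of_nonneg hs)
  · have := fenchel_young (-(√x)⁻¹) (by rw [abs_neg, abs_of_nonneg hs])
    linarith

/-- The Poisson probability of `k` at mean `x`, multiplied by `√(2πx)`, so that it converges to the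
unnormalized Gaussian density in the variable `(k - x) / √x`. -/
noncomputable def scaledPoisson (x : ℝ) (k : ℕ) : ℝ :=
  √(2 * Real.pi * x) * (Real.exp (-x) * x ^ k / k !)

lemma scaledPoisson_nonneg {x : ℝ} (hx : 0 ≤ x) (k : ℕ) : 0 ≤ scaledPoisson x k := by
  unfold scaledPoisson; positivity

lemma scaledPoisson_eq_mul_succ {x : ℝ} (hx : x ≠ 0) (k : ℕ) :
    scaledPoisson x k = (k + 1) / x * scaledPoisson x (k + 1) := by
  unfold scaledPoisson
  rw [Nat.factorial_succ, pow_succ]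
  push_cast
  field_simp

lemma scaledPoisson_eq_stirlingSeq {x : ℝ} (hx : 0 < x) {k : ℕ} (hk : k ≠ 0) :
    scaledPoisson x k =
      √Real.pi / Stirling.stirlingSeq k * √(x / k) * Real.exp (-(x * klFun (k / x))) := by
  have hk0 : (0 : ℝ) < k := by positivity
  have hexp : Real.exp (-(x * klFun (k / x))) = Real.exp (-x) * x ^ k * (Real.exp 1 / k) ^ k := by
    rw [klFun_apply, Real.log_div hk0.ne' hx.ne']
    have : -(x * (k / x * (Real.log k - Real.log x) + 1 - k / x)) =
        -x + k * Real.log x + k * (1 - Real.log k) := by field_simp; ring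
    rw [this, Real.exp_add, Real.exp_add, Real.exp_nat_mul, Real.exp_nat_mul, Real.exp_log hx,
      Real.exp_sub, Real.exp_log hk0]
  have hsqrt : √(x / k) * √(2 * k) = √(2 * x) := by
    rw [← Real.sqrt_mul (by positivity)]; congr 1; field_simp
  have hmul : √(2 * Real.pi * x) = √Real.pi * (√(x / k) * √(2 * k)) := by
    rw [hsqrt, ← Real.sqrt_mul Real.pi_pos.le]; congr 1; ring
  rw [scaledPoisson, hexp, Stirling.stirlingSeq, hmul, ← inv_div (k : ℝ) (Real.exp 1), inv_pow]
  field_simp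

lemma scaledPoisson_le {x : ℝ} (hx : 1 ≤ x) (k : ℕ) :
    scaledPoisson x k ≤ Real.exp (1 - |k + 1 - x| / √x / 2) := by
  have hx0 : 0 < x := by linarith
  have hk0 : (0 : ℝ) < k + 1 := by positivity
  set u : ℝ := (k + 1 - x) / √x with hu
  have habs : |(k + 1 - x : ℝ)| / √x = |u| := by rw [hu, abs_div, abs_of_pos (Real.sqrt_pos.2 hx0)]
  have hstirling : √Real.pi / Stirling.stirlingSeq (k + 1) ≤ 1 :=
    div_le_one_of_le₀ (Stirling.sqrt_pi_le_stirlingSeq k.succ_ne_zero)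
      ((Real.sqrt_nonneg _).trans (Stirling.sqrt_pi_le_stirlingSeq k.succ_ne_zero))
  have hratio : √((k + 1) / x) ≤ Real.exp (|u| / 2) := by
    have h1 : (k + 1) / x ≤ |u| + 1 := by
      have : (k + 1) / x - 1 = u * (√x)⁻¹ := by
        rw [hu, ← div_eq_mul_inv, div_div, Real.mul_self_sqrt hx0.le]; field_simp
      have h2 : |u * (√x)⁻¹| ≤ |u| := by
        rw [abs_mul, abs_of_nonneg (by positivity : 0 ≤ (√x)⁻¹)]
        exact mul_le_of_le_one_right (abs_nonneg _)
          (inv_le_one_of_one_le₀ (Real.one_le_sqrt.2 hx))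
      linarith [le_abs_self (u * (√x)⁻¹)]
    rw [Real.exp_half]
    exact Real.sqrt_le_sqrt (h1.trans (Real.add_one_le_exp _))
  calc scaledPoisson x k
      = √Real.pi / Stirling.stirlingSeq (k + 1) * ((k + 1) / x * √(((k + 1) / x)⁻¹)) *
          Real.exp (-(x * klFun ((k + 1) / x))) := by
        rw [scaledPoisson_eq_mul_succ hx0.ne', scaledPoisson_eq_stirlingSeq hx0 k.succ_ne_zero,
          inv_div]
        push_cast
        ring
    _ = √Real.pi / Stirling.stirlingSeq (k + 1) * √((k + 1) / x) *
          Real.exp (-(x * klFun ((k + 1) / x))) := by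
        rw [Real.sqrt_inv, ← div_eq_mul_inv ((k + 1) / x), Real.div_sqrt]
    _ ≤ 1 * Real.exp (|u| / 2) * Real.exp (1 - |u|) := by
        gcongr
        linarith [abs_sub_div_sqrt_sub_one_le_mul_klFun hx hk0.le]
    _ = Real.exp (1 - |(k + 1 - x : ℝ)| / √x / 2) := by
        rw [one_mul, ← Real.exp_add, habs]; ring_nf

lemma klFun_one_add_sub_sq_div_two_isBigO :
    (fun δ : ℝ => klFun (1 + δ) - δ ^ 2 / 2) =O[𝓝 0] fun δ => δ ^ 3 := by
  refine IsBigO.of_bound 4 ?_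
  filter_upwards [Metric.ball_mem_nhds (0 : ℝ) (by norm_num : (0 : ℝ) < 1 / 2)] with δ hδ
  rw [Metric.mem_ball, dist_zero_right, Real.norm_eq_abs] at hδ
  set r := Real.log (1 + δ) - δ + δ ^ 2 / 2 with hr
  have hlog : |r| ≤ 2 * |δ| ^ 3 := by
    have h := Real.abs_log_sub_add_sum_range_le (x := -δ) (by rw [abs_neg]; linarith) 2
    rw [abs_neg, sub_neg_eq_add, Finset.sum_range_succ, Finset.sum_range_one] at h
    have : r = (-δ) ^ (0 + 1) / ((0 : ℕ) + 1) + (-δ) ^ (1 + 1) / ((1 : ℕ) + 1) +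
        Real.log (1 + δ) := by rw [hr]; push_cast; ring
    rw [this]
    refine h.trans ((div_le_iff₀ (by linarith)).2 ?_)
    have : 0 ≤ |δ| ^ 3 := by positivity
    norm_num
    nlinarith
  have hkl : klFun (1 + δ) - δ ^ 2 / 2 = (1 + δ) * r - δ ^ 3 / 2 := by
    rw [klFun_apply, hr]; ring
  rw [Real.norm_eq_abs, Real.norm_eq_abs, abs_pow, hkl]
  calc |(1 + δ) * r - δ ^ 3 / 2| ≤ |1 + δ| * |r| + |δ| ^ 3 / 2 := by
        refine (abs_sub _ _).trans_eq ?_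
        rw [abs_mul, abs_div, abs_pow, abs_two]
    _ ≤ 3 / 2 * (2 * |δ| ^ 3) + |δ| ^ 3 / 2 := by
        gcongr
        exact (abs_add_le _ _).trans (by rw [abs_one]; linarith)
    _ ≤ 4 * |δ| ^ 3 := by linarith [pow_nonneg (abs_nonneg δ) 3]

lemma tendsto_mul_klFun_one_add_div_sqrt {v : ℝ → ℝ} {u : ℝ} (hv : Tendsto v atTop (𝓝 u)) :
    Tendsto (fun x => x * klFun (1 + v x / √x)) atTop (𝓝 (u ^ 2 / 2)) := by
  have hδ : Tendsto (fun x => v x / √x) atTop (𝓝 0) := hv.div_atTop Real.tendsto_sqrt_atTop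
  have hremainder : (fun x => x * (klFun (1 + v x / √x) - (v x / √x) ^ 2 / 2)) =O[atTop]
      fun x => v x ^ 2 * (v x / √x) := by
    refine ((isBigO_refl (fun x : ℝ => x) atTop).mul
      (klFun_one_add_sub_sq_div_two_isBigO.comp_tendsto hδ)).trans_eventuallyEq ?_
    filter_upwards [eventually_gt_atTop 0] with x hx
    have := Real.sq_sqrt hx.le
    simp only [Function.comp_apply]
    field_simp
    rw [this, mul_comm]
  have hlim := (hremainder.trans_tendsto (by simpa using (hv.pow 2).mul hδ)).add
    ((hv.pow 2).div_const 2)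
  rw [zero_add] at hlim
  refine hlim.congr' ?_
  filter_upwards [eventually_gt_atTop 0] with x hx
  have := Real.sq_sqrt hx.le
  field_simp
  rw [this]
  ring

lemma tendsto_scaledPoisson {k : ℝ → ℕ} {u : ℝ}
    (hk : Tendsto (fun x => (k x - x) / √x) atTop (𝓝 u)) :
    Tendsto (fun x => scaledPoisson x (k x)) atTop (𝓝 (Real.exp (-(u ^ 2 / 2)))) := by
  have hratio_eq : ∀ᶠ x : ℝ in atTop, 1 + (k x - x) / √x / √x = k x / x := by
    filter_upwards [eventually_gt_atTop 0] with x hx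
    rw [div_div, Real.mul_self_sqrt hx.le]
    field_simp
    ring
  have hratio : Tendsto (fun x => (k x : ℝ) / x) atTop (𝓝 1) := by
    refine Tendsto.congr' hratio_eq ?_
    simpa using (hk.div_atTop Real.tendsto_sqrt_atTop).const_add 1
  have hk_atTop : Tendsto k atTop atTop := by
    refine (tendsto_natCast_atTop_iff (R := ℝ)).1 ?_
    refine (hratio.pos_mul_atTop one_pos tendsto_id).congr' ?_
    filter_upwards [eventually_ne_atTop 0] with x hx
    exact div_mul_cancel₀ _ hx
  have hkl : Tendsto (fun x => x * klFun (k x / x)) atTop (𝓝 (u ^ 2 / 2)) :=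
    (tendsto_mul_klFun_one_add_div_sqrt hk).congr' (hratio_eq.mono fun x hx => by rw [hx])
  have hstirling := tendsto_const_nhds (x := √Real.pi).div
    (Stirling.tendsto_stirlingSeq_sqrt_pi.comp hk_atTop) (Real.sqrt_ne_zero'.2 Real.pi_pos)
  have hsqrt : Tendsto (fun x => √(x / k x)) atTop (𝓝 1) := by
    simpa using (hratio.inv₀ one_ne_zero).sqrt
  have hlim := (hstirling.mul hsqrt).mul ((Real.continuous_exp.tendsto _).comp hkl.neg)
  rw [div_self (Real.sqrt_ne_zero'.2 Real.pi_pos), one_mul, one_mul] at hlim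
  refine hlim.congr' ?_
  filter_upwards [eventually_gt_atTop 0, hk_atTop.eventually_ne_atTop 0] with x hx hkx
  exact (scaledPoisson_eq_stirlingSeq hx hkx).symm

lemma map_natFloor_volume_restrict_Ici :
    (volume.restrict (Set.Ici (0 : ℝ))).map Nat.floor = Measure.count := by
  refine Measure.ext_of_singleton fun k => ?_
  have hpre : Nat.floor ⁻¹' {k} ∩ Set.Ici (0 : ℝ) = Set.Ico (k : ℝ) (k + 1) := by
    ext t
    simp only [Set.mem_inter_iff, Set.mem_preimage, Set.mem_singleton_iff, Set.mem_Ici, Set.mem_Ico]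
    exact ⟨fun ⟨h, ht⟩ => (Nat.floor_eq_iff ht).1 h, fun h =>
      have ht := k.cast_nonneg.trans h.1
      ⟨(Nat.floor_eq_iff ht).2 h, ht⟩⟩
  rw [Measure.map_apply Nat.measurable_floor (measurableSet_singleton k),
    Measure.restrict_apply (Nat.measurable_floor (measurableSet_singleton k)), hpre]
  simp

lemma integral_indicator_natFloor_comp_affine (f : ℕ → ℝ) (a : ℝ) {s : ℝ} (hs : 0 < s) :
    ∫ u, (Set.Ici 0).indicator (fun t : ℝ => f ⌊t⌋₊) (a + u * s) = s⁻¹ * ∑' k, f k := by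
  have hcount : ∫ k, f k ∂Measure.count = ∑' k, f k := by
    simpa [Measure.count] using integral_sum_dirac (f := f) (x := id) (c := fun _ => 1) (by simp)
  have hfloor : ∫ t in Set.Ici (0 : ℝ), f ⌊t⌋₊ = ∑' k, f k := by
    rw [← hcount, ← map_natFloor_volume_restrict_Ici,
      integral_map Nat.measurable_floor.aemeasurable (by fun_prop)]
  rw [Measure.integral_comp_mul_right
      (fun t => (Set.Ici 0).indicator (fun t : ℝ => f ⌊t⌋₊) (a + t)) s,
    integral_add_left_eq_self, integral_indicator measurableSet_Ici, hfloor, smul_eq_mul, abs_inv,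
    abs_of_pos hs]

lemma integrable_abs_add_one_pow_mul_exp_neg (n : ℕ) {c : ℝ} (hc : 0 < c) :
    Integrable fun u : ℝ => (|u| + 1) ^ n * Real.exp (-(c * |u|)) := by
  set K := (n + 2)! / c ^ (n + 2) * Real.exp c
  refine (integrable_inv_one_add_sq.const_mul K).mono' (by fun_prop) (ae_of_all _ fun u => ?_)
  have hexp := Real.pow_div_factorial_le_exp (x := c * (|u| + 1)) (by positivity) (n + 2)
  rw [mul_pow, mul_add, mul_one, Real.exp_add, div_le_iff₀ (by positivity)] at hexp
  have hsq : 1 + u ^ 2 ≤ (|u| + 1) ^ 2 := by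
    rw [← sq_abs u]; nlinarith [abs_nonneg u]
  rw [Real.norm_of_nonneg (by positivity), ← div_eq_mul_inv, le_div_iff₀ (by positivity)]
  calc (|u| + 1) ^ n * Real.exp (-(c * |u|)) * (1 + u ^ 2)
      ≤ (|u| + 1) ^ n * Real.exp (-(c * |u|)) * (|u| + 1) ^ 2 := by gcongr
    _ = c ^ (n + 2) * (|u| + 1) ^ (n + 2) / (c ^ (n + 2) * Real.exp (c * |u|)) := by
        rw [Real.exp_neg]; field_simp; ring
    _ ≤ Real.exp (c * |u|) * Real.exp c * (n + 2)! / (c ^ (n + 2) * Real.exp (c * |u|)) := by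
        gcongr
    _ = K := by simp only [K]; field_simp

lemma abs_natFloor_sub_div_sqrt_sub_le {x u : ℝ} (hx : 0 < x) (h : 0 ≤ x + u * √x) :
    |(⌊x + u * √x⌋₊ - x) / √x - u| ≤ (√x)⁻¹ := by
  have hs := Real.sqrt_pos.2 hx
  have : (⌊x + u * √x⌋₊ - x) / √x - u = (⌊x + u * √x⌋₊ - (x + u * √x)) / √x := by
    field_simp; ring
  rw [this, abs_div, abs_of_pos hs, ← one_div]
  gcongr
  rw [abs_le]
  constructor <;> linarith [Nat.floor_le h, Nat.lt_floor_add_one (x + u * √x)]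

lemma add_mul_sqrt_nonneg {x u : ℝ} (h : u ^ 2 ≤ x) : 0 ≤ x + u * √x := by
  have hneg : -√x ≤ u := neg_le_of_abs_le (Real.abs_le_sqrt h)
  have hx := Real.mul_self_sqrt ((sq_nonneg u).trans h)
  nlinarith [mul_le_mul_of_nonneg_right hneg (Real.sqrt_nonneg x)]

lemma tendsto_natFloor_sub_div_sqrt (u : ℝ) :
    Tendsto (fun x : ℝ => (⌊x + u * √x⌋₊ - x) / √x) atTop (𝓝 u) := by
  rw [tendsto_iff_norm_sub_tendsto_zero]
  refine squeeze_zero' (Eventually.of_forall fun x => norm_nonneg _) ?_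
    (tendsto_inv_atTop_zero.comp Real.tendsto_sqrt_atTop)
  filter_upwards [eventually_gt_atTop 0, eventually_ge_atTop (u ^ 2)] with x hx hux
  exact abs_natFloor_sub_div_sqrt_sub_le hx (add_mul_sqrt_nonneg hux)

lemma abs_pow_mul_scaledPoisson_rpow_natFloor_le {ν x u : ℝ} (hν : 0 ≤ ν) (hx : 1 ≤ x)
    (h : 0 ≤ x + u * √x) (n : ℕ) :
    |(⌊x + u * √x⌋₊ - x) / √x| ^ n * scaledPoisson x ⌊x + u * √x⌋₊ ^ ν ≤
      Real.exp (3 / 2 * ν) * ((|u| + 1) ^ n * Real.exp (-(ν / 2 * |u|))) := by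
  have hx0 : 0 < x := by linarith
  have hs := Real.sqrt_pos.2 hx0
  have hpow : |(⌊x + u * √x⌋₊ - x) / √x| ≤ |u| + 1 := by
    have := abs_natFloor_sub_div_sqrt_sub_le hx0 h
    have := inv_le_one_of_one_le₀ (Real.one_le_sqrt.2 hx)
    have := abs_sub_abs_le_abs_sub ((⌊x + u * √x⌋₊ - x) / √x) u
    linarith
  have hdist : |u| - 1 ≤ |(⌊x + u * √x⌋₊ + 1 - x : ℝ)| / √x := by
    rw [le_div_iff₀ hs]
    have : |u| * √x = |(x + u * √x) - x| := by rw [add_sub_cancel_left, abs_mul, abs_of_pos hs]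
    have : 1 ≤ √x := Real.one_le_sqrt.2 hx
    have := Nat.floor_le h
    have := Nat.lt_floor_add_one (x + u * √x)
    have := abs_sub_abs_le_abs_sub ((x + u * √x) - x) (⌊x + u * √x⌋₊ + 1 - x)
    have : |(x + u * √x) - x - (⌊x + u * √x⌋₊ + 1 - x)| ≤ 1 := by
      rw [abs_le]; constructor <;> linarith
    linarith
  have hscaled : scaledPoisson x ⌊x + u * √x⌋₊ ^ ν ≤
      Real.exp (3 / 2 * ν) * Real.exp (-(ν / 2 * |u|)) := by
    calc scaledPoisson x ⌊x + u * √x⌋₊ ^ ν ≤ Real.exp (3 / 2 - |u| / 2) ^ ν := by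
          gcongr
          · exact scaledPoisson_nonneg hx0.le _
          · exact (scaledPoisson_le hx _).trans (Real.exp_le_exp.2 (by linarith))
      _ = _ := by rw [← Real.exp_mul, ← Real.exp_add]; ring_nf
  calc _ ≤ (|u| + 1) ^ n * (Real.exp (3 / 2 * ν) * Real.exp (-(ν / 2 * |u|))) := by
        gcongr
        exact Real.rpow_nonneg (scaledPoisson_nonneg hx0.le _) _
    _ = _ := by ring

lemma tendsto_tsum_abs_pow_mul_scaledPoisson_rpow {ν : ℝ} (hν : 0 < ν) (n : ℕ) :
    Tendsto (fun x : ℝ => (√x)⁻¹ * ∑' k : ℕ, |(k - x) / √x| ^ n * scaledPoisson x k ^ ν) atTop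
      (𝓝 (∫ u : ℝ, |u| ^ n * Real.exp (-(ν / 2) * u ^ 2))) := by
  set f : ℝ → ℕ → ℝ := fun x k => |(k - x) / √x| ^ n * scaledPoisson x k ^ ν
  set F : ℝ → ℝ → ℝ := fun x u => (Set.Ici 0).indicator (fun t : ℝ => f x ⌊t⌋₊) (x + u * √x)
  have hF {x u : ℝ} (h : 0 ≤ x + u * √x) : F x u = f x ⌊x + u * √x⌋₊ :=
    Set.indicator_of_mem (s := Set.Ici (0 : ℝ)) h _
  have hlimit (u : ℝ) :
      Tendsto (fun x => F x u) atTop (𝓝 (|u| ^ n * Real.exp (-(ν / 2) * u ^ 2))) := by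
    have hu := tendsto_natFloor_sub_div_sqrt u
    have hexp : Real.exp (-(ν / 2) * u ^ 2) = Real.exp (-(u ^ 2 / 2)) ^ ν := by
      rw [← Real.exp_mul]; ring_nf
    rw [hexp]
    refine ((hu.abs.pow n).mul ((tendsto_scaledPoisson hu).rpow_const (.inr hν.le))).congr' ?_
    filter_upwards [eventually_ge_atTop (u ^ 2)] with x hx
    exact (hF (add_mul_sqrt_nonneg hx)).symm
  have hbound : ∀ᶠ x in atTop, ∀ᵐ u,
      ‖F x u‖ ≤ Real.exp (3 / 2 * ν) * ((|u| + 1) ^ n * Real.exp (-(ν / 2 * |u|))) := by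
    filter_upwards [eventually_ge_atTop 1] with x hx
    refine ae_of_all _ fun u => ?_
    by_cases h : 0 ≤ x + u * √x
    · have hf0 : 0 ≤ f x ⌊x + u * √x⌋₊ :=
        mul_nonneg (by positivity) (Real.rpow_nonneg (scaledPoisson_nonneg (by linarith) _) _)
      rw [hF h, Real.norm_of_nonneg hf0]
      exact abs_pow_mul_scaledPoisson_rpow_natFloor_le hν.le hx h n
    · have hF0 : F x u = 0 := Set.indicator_of_notMem (s := Set.Ici (0 : ℝ)) h _
      rw [hF0, norm_zero]
      positivity
  have hmeas (x : ℝ) : AEStronglyMeasurable (F x) volume :=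
    ((((measurable_from_nat (f := f x)).comp Nat.measurable_floor).indicator measurableSet_Ici).comp
      (by fun_prop : Measurable fun u : ℝ => x + u * √x)).aestronglyMeasurable
  refine (tendsto_integral_filter_of_dominated_convergence _ (Eventually.of_forall hmeas) hbound
    ((integrable_abs_add_one_pow_mul_exp_neg n (half_pos hν)).const_mul _)
    (ae_of_all _ hlimit)).congr' ?_
  filter_upwards [eventually_gt_atTop 0] with x hx
  exact integral_indicator_natFloor_comp_affine (f x) x (Real.sqrt_pos.2 hx)

/-- The unnormalized CMP probability of `i` at rate `λ = x ^ ν`. In the variable `x` the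
distribution concentrates around `x` for every `ν`. -/
noncomputable def cmpWeight (ν x : ℝ) (i : ℕ) : ℝ := (x ^ i / i !) ^ ν

/-- The CMP distribution on `ℕ` at rate `λ = x ^ ν`. -/
noncomputable def cmpMeasure (ν x : ℝ) : Measure ℕ :=
  Measure.sum fun i => ENNReal.ofReal (cmpWeight ν x i / cmpZ (x ^ ν) ν) • Measure.dirac i

/-- The moments of the relative deviation `i / x - 1` under the CMP distribution. -/
noncomputable def cmpMoment (ν x : ℝ) (l : ℕ) : ℝ := ∫ i : ℕ, ((i : ℝ) / x - 1) ^ l ∂cmpMeasure ν x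

section CMPDistribution

variable {ν x : ℝ}

lemma cmpWeight_pos (hx : 0 < x) (i : ℕ) : 0 < cmpWeight ν x i := by
  unfold cmpWeight; positivity

lemma cmpZ_rpow (hx : 0 ≤ x) : cmpZ (x ^ ν) ν = ∑' i, cmpWeight ν x i := by
  refine tsum_congr fun i => ?_
  rw [cmpWeight, Real.div_rpow (by positivity) (by positivity), Real.rpow_pow_comm hx]

lemma cmpWeight_le (hν : 0 ≤ ν) (hx : 0 ≤ x) (i : ℕ) :
    cmpWeight ν x i ≤ Real.exp (2 * x) ^ ν * ((1 / 2 : ℝ) ^ ν) ^ i := by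
  rw [Real.rpow_pow_comm (by norm_num), ← Real.mul_rpow (by positivity) (by positivity)]
  refine Real.rpow_le_rpow (by positivity) ?_ hν
  calc x ^ i / i ! = (2 * x) ^ i / i ! * (1 / 2) ^ i := by
        rw [div_mul_eq_mul_div, ← mul_pow]; ring_nf
    _ ≤ Real.exp (2 * x) * (1 / 2) ^ i := by
        gcongr
        exact Real.pow_div_factorial_le_exp _ (by positivity) i

lemma summable_cmpWeight_mul_of_isBigO_pow (hν : 0 < ν) (hx : 0 ≤ x) {f : ℕ → ℝ} {n : ℕ}
    (hf : f =O[atTop] fun i : ℕ => (i : ℝ) ^ n) : Summable fun i => cmpWeight ν x i * f i := by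
  have hgeom : Summable fun i : ℕ => (i : ℝ) ^ n * ((1 / 2 : ℝ) ^ ν) ^ i :=
    summable_pow_mul_geometric_of_norm_lt_one n (by
      rw [Real.norm_of_nonneg (by positivity)]
      exact Real.rpow_lt_one (by norm_num) (by norm_num) hν)
  refine summable_of_isBigO_nat hgeom ?_
  simp_rw [mul_comm _ (((1 / 2 : ℝ) ^ ν) ^ _)]
  refine IsBigO.mul (.of_bound (Real.exp (2 * x) ^ ν) (Eventually.of_forall fun i => ?_)) hf
  rw [Real.norm_of_nonneg (by unfold cmpWeight; positivity), Real.norm_of_nonneg (by positivity)]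
  exact cmpWeight_le hν.le hx i

lemma summable_cmpWeight (hν : 0 < ν) (hx : 0 ≤ x) : Summable (cmpWeight ν x) := by
  simpa using summable_cmpWeight_mul_of_isBigO_pow hν hx (f := fun _ => 1) (n := 0)
    (by simpa using isBigO_refl (fun _ : ℕ => (1 : ℝ)) atTop)

lemma cmpZ_rpow_pos (hν : 0 < ν) (hx : 0 < x) : 0 < cmpZ (x ^ ν) ν := by
  rw [cmpZ_rpow hx.le]
  exact (summable_cmpWeight hν hx.le).tsum_pos (fun i => (cmpWeight_pos hx i).le) 0
    (cmpWeight_pos hx 0)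

lemma integral_cmpMeasure (hν : 0 < ν) (hx : 0 < x) (f : ℕ → ℝ) :
    ∫ i, f i ∂cmpMeasure ν x = (∑' i, cmpWeight ν x i * f i) / cmpZ (x ^ ν) ν := by
  have hprob (i : ℕ) : 0 ≤ cmpWeight ν x i / cmpZ (x ^ ν) ν :=
    div_nonneg (cmpWeight_pos hx i).le (cmpZ_rpow_pos hν hx).le
  rw [cmpMeasure, integral_sum_dirac fun _ => ENNReal.ofReal_ne_top, ← tsum_div_const]
  refine tsum_congr fun i => ?_
  rw [ENNReal.toReal_ofReal (hprob i), smul_eq_mul, div_mul_eq_mul_div]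

lemma integrable_cmpMeasure_of_isBigO_pow (hν : 0 < ν) (hx : 0 < x) {f : ℕ → ℝ} {n : ℕ}
    (hf : f =O[atTop] fun i : ℕ => (i : ℝ) ^ n) : Integrable f (cmpMeasure ν x) := by
  refine integrable_sum_dirac (fun _ => ENNReal.ofReal_ne_top) ?_
  refine ((summable_cmpWeight_mul_of_isBigO_pow hν hx.le hf.norm_left).div_const
    (cmpZ (x ^ ν) ν)).congr fun i => ?_
  rw [ENNReal.toReal_ofReal (div_nonneg (cmpWeight_pos hx i).le (cmpZ_rpow_pos hν hx).le)]
  ring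

lemma isProbabilityMeasure_cmpMeasure (hν : 0 < ν) (hx : 0 < x) :
    IsProbabilityMeasure (cmpMeasure ν x) := by
  refine HasSum.isProbabilityMeasure_sum_dirac
    (fun i => div_nonneg (cmpWeight_pos hx i).le (cmpZ_rpow_pos hν hx).le) ?_
  have hsum := (summable_cmpWeight hν hx.le).hasSum.div_const (cmpZ (x ^ ν) ν)
  rwa [← cmpZ_rpow hx.le, div_self (cmpZ_rpow_pos hν hx).ne'] at hsum

lemma integral_cmpMeasure_rpow_mul (hν : 0 < ν) (hx : 0 < x) (g : ℕ → ℝ) :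
    ∫ i : ℕ, ((i : ℝ) / x) ^ ν * g i ∂cmpMeasure ν x = ∫ i, g (i + 1) ∂cmpMeasure ν x := by
  rw [integral_cmpMeasure hν hx, integral_cmpMeasure hν hx]
  congr 1
  rw [← Nat.succ_injective.tsum_eq]
  · refine tsum_congr fun i => ?_
    rw [← mul_assoc, cmpWeight, cmpWeight, ← Real.mul_rpow (by positivity) (by positivity)]
    congr 2
    rw [Nat.succ_eq_add_one, Nat.factorial_succ, pow_succ]
    push_cast
    field_simp
  · intro i hi
    rcases i with _ | i
    · simp [hν.ne'] at hi
    · exact ⟨i, rfl⟩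

lemma div_sub_one_isBigO (x : ℝ) :
    (fun i : ℕ => (i : ℝ) / x - 1) =O[atTop] fun i : ℕ => (i : ℝ) := by
  have hconst : (fun _ : ℕ => (1 : ℝ)) =O[atTop] fun i : ℕ => (i : ℝ) :=
    (isLittleO_const_id_atTop (1 : ℝ)).isBigO.comp_tendsto tendsto_natCast_atTop_atTop
  simpa [div_eq_inv_mul] using (isBigO_const_mul_self x⁻¹ _ _).sub hconst

lemma natCast_div_rpow_isBigO (hx : 0 ≤ x) :
    (fun i : ℕ => ((i : ℝ) / x) ^ ν) =O[atTop] fun i : ℕ => (i : ℝ) ^ ⌈ν⌉₊ := by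
  have hpow : (fun i : ℕ => (i : ℝ) ^ ν) =O[atTop] fun i : ℕ => (i : ℝ) ^ ⌈ν⌉₊ := by
    refine IsBigO.of_bound' ?_
    filter_upwards [eventually_ge_atTop 1] with i hi
    rw [Real.norm_of_nonneg (by positivity), Real.norm_of_nonneg (by positivity),
      ← Real.rpow_natCast]
    exact Real.rpow_le_rpow_of_exponent_le (by exact_mod_cast hi) (Nat.le_ceil ν)
  refine (hpow.const_mul_left (x ^ ν)⁻¹).congr_left fun i => ?_
  rw [Real.div_rpow i.cast_nonneg hx, div_eq_inv_mul]

lemma integrable_div_sub_one_pow (hν : 0 < ν) (hx : 0 < x) (l : ℕ) :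
    Integrable (fun i : ℕ => ((i : ℝ) / x - 1) ^ l) (cmpMeasure ν x) :=
  integrable_cmpMeasure_of_isBigO_pow hν hx ((div_sub_one_isBigO x).pow l)

lemma integrable_rpow_mul_div_sub_one_pow (hν : 0 < ν) (hx : 0 < x) (l : ℕ) :
    Integrable (fun i : ℕ => ((i : ℝ) / x) ^ ν * ((i : ℝ) / x - 1) ^ l) (cmpMeasure ν x) := by
  refine integrable_cmpMeasure_of_isBigO_pow (n := ⌈ν⌉₊ + l) hν hx ?_
  simp_rw [pow_add]
  exact (natCast_div_rpow_isBigO hx.le).mul ((div_sub_one_isBigO x).pow l)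

lemma cmpMoment_zero (hν : 0 < ν) (hx : 0 < x) : cmpMoment ν x 0 = 1 := by
  have := isProbabilityMeasure_cmpMeasure hν hx
  simp [cmpMoment]

lemma cmpWeight_eq_scaledPoisson_rpow (hx : 0 < x) (i : ℕ) :
    cmpWeight ν x i = (Real.exp x / √(2 * Real.pi * x)) ^ ν * scaledPoisson x i ^ ν := by
  rw [cmpWeight, ← Real.mul_rpow (by positivity) (scaledPoisson_nonneg hx.le i), scaledPoisson,
    Real.exp_neg]
  congr 1
  field_simp

lemma cmpZ_rpow_eq_tsum_scaledPoisson (hx : 0 < x) :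
    cmpZ (x ^ ν) ν = (Real.exp x / √(2 * Real.pi * x)) ^ ν * ∑' i, scaledPoisson x i ^ ν := by
  rw [cmpZ_rpow hx.le, ← tsum_mul_left]
  exact tsum_congr fun i => cmpWeight_eq_scaledPoisson_rpow hx i

lemma integral_exp_neg_half_mul_sq (b : ℝ) :
    ∫ u : ℝ, Real.exp (-(b / 2) * u ^ 2) = √(2 * Real.pi / b) := by
  rw [integral_gaussian, div_div_eq_mul_div, mul_comm Real.pi]

lemma tendsto_integral_abs_pow_cmpMeasure (hν : 0 < ν) (n : ℕ) :
    Tendsto (fun x : ℝ => ∫ i : ℕ, |(i - x) / √x| ^ n ∂cmpMeasure ν x) atTop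
      (𝓝 ((∫ u : ℝ, |u| ^ n * Real.exp (-(ν / 2) * u ^ 2)) / √(2 * Real.pi / ν))) := by
  have hdenom := tendsto_tsum_abs_pow_mul_scaledPoisson_rpow hν 0
  simp only [pow_zero, one_mul, integral_exp_neg_half_mul_sq] at hdenom
  refine ((tendsto_tsum_abs_pow_mul_scaledPoisson_rpow hν n).div hdenom
    (by positivity)).congr' ?_
  filter_upwards [eventually_gt_atTop 0] with x hx
  have hK : (Real.exp x / √(2 * Real.pi * x)) ^ ν ≠ 0 := by positivity
  rw [integral_cmpMeasure hν hx, cmpZ_rpow_eq_tsum_scaledPoisson hx,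
    Pi.div_apply, mul_div_mul_left _ _ (by positivity : (√x)⁻¹ ≠ 0), ← mul_div_mul_left _ _ hK,
    ← tsum_mul_left]
  congr 1
  refine tsum_congr fun i => ?_
  rw [cmpWeight_eq_scaledPoisson_rpow hx]
  ring

lemma integral_abs_div_sub_one_pow_isBigO (hν : 0 < ν) (n : ℕ) :
    (fun x : ℝ => ∫ i : ℕ, |(i : ℝ) / x - 1| ^ n ∂cmpMeasure ν x) =O[atTop]
      fun x => (√x)⁻¹ ^ n := by
  have hbounded := (tendsto_integral_abs_pow_cmpMeasure hν n).isBigO_one ℝ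
  refine ((isBigO_refl (fun x : ℝ => (√x)⁻¹ ^ n) atTop).mul hbounded).congr' ?_ (by simp)
  filter_upwards [eventually_gt_atTop 0] with x hx
  rw [← integral_const_mul]
  congr with i
  have : (i : ℝ) / x - 1 = (√x)⁻¹ * ((i - x) / √x) := by
    rw [inv_mul_eq_div, div_div, Real.mul_self_sqrt hx.le]; field_simp
  rw [this, abs_mul, mul_pow, abs_of_nonneg (by positivity : 0 ≤ (√x)⁻¹)]

lemma cmpMoment_isBigO_one (hν : 0 < ν) (l : ℕ) :
    (fun x => cmpMoment ν x l) =O[atTop] fun _ => (1 : ℝ) := by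
  have hinv : (fun x : ℝ => (√x)⁻¹ ^ l) =O[atTop] fun _ => (1 : ℝ) :=
    ((tendsto_inv_atTop_zero.comp Real.tendsto_sqrt_atTop).pow l).isBigO_one ℝ
  refine .trans (.of_norm_le fun x => ?_) ((integral_abs_div_sub_one_pow_isBigO hν l).trans hinv)
  exact (norm_integral_le_integral_norm _).trans_eq (by simp only [norm_pow, Real.norm_eq_abs])

lemma cmpWeight_hasDerivAt (hx : 0 < x) (i : ℕ) :
    HasDerivAt (fun y => cmpWeight ν y i) (ν / x * (i * cmpWeight ν x i)) x := by
  have hpos : (0 : ℝ) < x ^ i / i ! := by positivity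
  refine (((hasDerivAt_pow i x).div_const (i ! : ℝ)).rpow_const (p := ν)
    (.inl hpos.ne')).congr_deriv ?_
  rw [Real.rpow_sub_one hpos.ne', cmpWeight]
  rcases i with _ | i
  · simp
  · rw [Nat.add_sub_cancel]
    field_simp
    ring

lemma tsum_cmpWeight_hasDerivAt (hν : 0 < ν) (hx : 0 < x) :
    HasDerivAt (fun y => ∑' i, cmpWeight ν y i) (∑' i : ℕ, ν / x * (i * cmpWeight ν x i)) x := by
  have hx_mem : x ∈ Set.Ioo (x / 2) (2 * x) := ⟨by linarith, by linarith⟩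
  have hbound : Summable fun i : ℕ => ν / (x / 2) * (i * cmpWeight ν (2 * x) i) := by
    simp_rw [mul_comm _ (cmpWeight _ _ _)]
    refine (summable_cmpWeight_mul_of_isBigO_pow (n := 1) hν (by positivity) ?_).mul_left _
    simpa using isBigO_refl (fun i : ℕ => (i : ℝ)) atTop
  refine hasDerivAt_tsum_of_isPreconnected hbound isOpen_Ioo isPreconnected_Ioo
    (fun i y hy => cmpWeight_hasDerivAt ((half_pos hx).trans hy.1) i) (fun i y hy => ?_) hx_mem
    (summable_cmpWeight hν hx.le) hx_mem
  have hy0 : 0 < y := (half_pos hx).trans hy.1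
  have hwy := cmpWeight_pos (ν := ν) hy0 i
  rw [Real.norm_of_nonneg (by positivity)]
  have hw : cmpWeight ν y i ≤ cmpWeight ν (2 * x) i := by
    unfold cmpWeight
    gcongr
    exact hy.2.le
  gcongr
  exact hy.1.le

lemma log_cmpZ_rpow_hasDerivAt (hν : 0 < ν) (hx : 0 < x) :
    HasDerivAt (fun y => Real.log (cmpZ (y ^ ν) ν)) (ν * (1 + cmpMoment ν x 1)) x := by
  have hZ := cmpZ_rpow_pos hν hx
  have hmean : ν * (1 + cmpMoment ν x 1) = ∫ i : ℕ, ν / x * i ∂cmpMeasure ν x := by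
    have := isProbabilityMeasure_cmpMeasure hν hx
    have hint := integrable_div_sub_one_pow hν hx 1
    have : (fun i : ℕ => ν / x * (i : ℝ)) = fun i : ℕ => ν * (1 + ((i : ℝ) / x - 1) ^ 1) := by
      ext i; ring
    rw [this, integral_const_mul, integral_add (integrable_const _) hint, integral_const]
    simp [cmpMoment]
  have hderiv : HasDerivAt (fun y => cmpZ (y ^ ν) ν) (∑' i : ℕ, ν / x * (i * cmpWeight ν x i)) x :=
    (tsum_cmpWeight_hasDerivAt hν hx).congr_of_eventuallyEq <| by
      filter_upwards [eventually_gt_nhds hx] with y hy using cmpZ_rpow hy.le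
  refine (hderiv.log hZ.ne').congr_deriv ?_
  rw [hmean, integral_cmpMeasure hν hx]
  congr 1
  exact tsum_congr fun i => by ring

/-- `cmpZ` at rate `λ = x ^ ν`, divided by its leading asymptotics. -/
noncomputable def normalizedCmpZ (ν x : ℝ) : ℝ :=
  cmpZ (x ^ ν) ν * x ^ ((ν - 1) / 2) * (2 * Real.pi) ^ ((ν - 1) / 2) * √ν * Real.exp (-(ν * x))

lemma normalizedCmpZ_pos (hν : 0 < ν) (hx : 0 < x) : 0 < normalizedCmpZ ν x := by
  have := cmpZ_rpow_pos hν hx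
  unfold normalizedCmpZ
  positivity

lemma normalizedCmpZ_eq_tsum_scaledPoisson (hν : 0 < ν) (hx : 0 < x) :
    normalizedCmpZ ν x = √(ν / (2 * Real.pi)) * ((√x)⁻¹ * ∑' i, scaledPoisson x i ^ ν) := by
  have hpow : x ^ ((ν - 1) / 2) * (2 * Real.pi) ^ ((ν - 1) / 2) =
      √(2 * Real.pi * x) ^ ν / √(2 * Real.pi * x) := by
    rw [mul_comm, ← Real.mul_rpow (by positivity) hx.le, Real.sqrt_eq_rpow, ← Real.rpow_mul
      (by positivity), ← Real.rpow_sub (by positivity)]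
    congr 1; ring
  have hexp : Real.exp (-(ν * x)) = (Real.exp x ^ ν)⁻¹ := by
    rw [← Real.exp_mul, ← Real.exp_neg, mul_comm]
  rw [normalizedCmpZ, cmpZ_rpow_eq_tsum_scaledPoisson hx, mul_assoc _ (x ^ _), hpow, hexp,
    Real.div_rpow (by positivity) (by positivity), Real.sqrt_mul (by positivity) x,
    Real.sqrt_div hν.le]
  field_simp

lemma tendsto_normalizedCmpZ (hν : 0 < ν) : Tendsto (normalizedCmpZ ν) atTop (𝓝 1) := by
  have hlim := (tendsto_tsum_abs_pow_mul_scaledPoisson_rpow hν 0).const_mul √(ν / (2 * Real.pi))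
  simp only [pow_zero, one_mul, integral_exp_neg_half_mul_sq] at hlim
  rw [← Real.sqrt_mul (by positivity), div_mul_div_cancel₀ (by positivity), div_self hν.ne',
    Real.sqrt_one] at hlim
  refine hlim.congr' ?_
  filter_upwards [eventually_gt_atTop 0] with x hx
  exact (normalizedCmpZ_eq_tsum_scaledPoisson hν hx).symm

lemma log_normalizedCmpZ_hasDerivAt (hν : 0 < ν) (hx : 0 < x) :
    HasDerivAt (fun y => Real.log (normalizedCmpZ ν y))
      (ν * cmpMoment ν x 1 + (ν - 1) / 2 * x⁻¹) x := by
  have hlog : (fun y => Real.log (normalizedCmpZ ν y)) =ᶠ[𝓝 x] fun y =>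
      Real.log (cmpZ (y ^ ν) ν) + (ν - 1) / 2 * Real.log y +
        Real.log ((2 * Real.pi) ^ ((ν - 1) / 2) * √ν) - ν * y := by
    filter_upwards [eventually_gt_nhds hx] with y hy
    have hZ := cmpZ_rpow_pos hν hy
    have hpow : 0 < y ^ ((ν - 1) / 2) := by positivity
    rw [normalizedCmpZ, Real.log_mul (by positivity) (by positivity), Real.log_exp,
      mul_assoc _ _ √ν, Real.log_mul (by positivity) (by positivity), Real.log_mul hZ.ne' hpow.ne',
      Real.log_rpow hy]
    ring
  refine HasDerivAt.congr_of_eventuallyEq ?_ hlog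
  refine ((((log_cmpZ_rpow_hasDerivAt hν hx).add
    ((Real.hasDerivAt_log hx.ne').const_mul _)).add_const _).sub
      ((hasDerivAt_id x).const_mul ν)).congr_deriv ?_
  ring

end CMPDistribution

lemma isBigO_pow_pow_of_le {α : Type*} {l : Filter α} {ε : α → ℝ} (hε : ε =O[l] fun _ => (1 : ℝ))
    {m n : ℕ} (hmn : m ≤ n) : (fun a => ε a ^ n) =O[l] fun a => ε a ^ m := by
  obtain ⟨j, rfl⟩ := Nat.exists_eq_add_of_le hmn
  simpa [pow_add] using (isBigO_refl (fun a => ε a ^ m) l).mul (hε.pow j)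

section BinomialExpansion

lemma ringChoose_eq_prod_div_factorial (ν : ℝ) (n : ℕ) :
    Ring.choose ν n = (∏ i ∈ range n, (ν - i)) / n ! := by
  rw [Ring.choose_eq_smul, ← Polynomial.aeval_eq_smeval, ← Polynomial.eval_map_algebraMap,
    descPochhammer_map, descPochhammer_eval_eq_prod_range, smul_eq_mul, inv_mul_eq_div]

lemma one_add_rpow_sub_sum_choose_isBigO (ν : ℝ) (n : ℕ) :
    (fun d : ℝ => (1 + d) ^ ν - ∑ j ∈ range n, Ring.choose ν j * d ^ j) =O[𝓝 0]
      fun d => |d| ^ n := by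
  have hseries := Real.one_add_rpow_hasFPowerSeriesAt_zero (a := ν)
  refine (hseries.isBigO_sub_partialSum_pow n).congr_left fun d => ?_
  simp only [FormalMultilinearSeries.partialSum, binomialSeries_apply, zero_add]
  simp [mul_comm]

lemma abs_one_add_rpow_sub_sum_choose_le {ν : ℝ} (hν : 0 ≤ ν) {n M : ℕ} (hn : n ≤ M) (hM : ν ≤ M)
    {d : ℝ} (hd : -1 ≤ d) :
    |(1 + d) ^ ν - ∑ j ∈ range n, Ring.choose ν j * d ^ j| ≤
      (1 + ∑ j ∈ range n, |Ring.choose ν j|) * (1 + |d|) ^ M := by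
  have hbase : 1 ≤ 1 + |d| := le_add_of_nonneg_right (abs_nonneg d)
  have hrpow : |(1 + d) ^ ν| ≤ (1 + |d|) ^ M := by
    rw [abs_of_nonneg (Real.rpow_nonneg (by linarith) ν), ← Real.rpow_natCast]
    exact (Real.rpow_le_rpow (by linarith) (by linarith [le_abs_self d]) hν).trans
      (Real.rpow_le_rpow_of_exponent_le hbase hM)
  have hterm : ∀ j ∈ range n, |Ring.choose ν j * d ^ j| ≤ |Ring.choose ν j| * (1 + |d|) ^ M := by
    intro j hj
    rw [abs_mul, abs_pow]
    gcongr
    exact (pow_le_pow_left₀ (abs_nonneg d) (by linarith) j).trans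
      (pow_le_pow_right₀ hbase (by linarith [mem_range.1 hj]))
  rw [add_mul, one_mul, sum_mul]
  exact (abs_sub _ _).trans
    (add_le_add hrpow ((abs_sum_le_sum_abs _ _).trans (sum_le_sum hterm)))

lemma exists_abs_le_mul_pow_add_pow {f : ℝ → ℝ} {s : Set ℝ} {B : ℝ} {n M : ℕ}
    (hzero : f =O[𝓝 0] fun d => |d| ^ n) (hgrowth : ∀ d ∈ s, |f d| ≤ B * (1 + |d|) ^ M) :
    ∃ C, ∀ d ∈ s, |f d| ≤ C * (|d| ^ n + |d| ^ M) := by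
  obtain ⟨K, hK, hnear⟩ := hzero.exists_nonneg
  obtain ⟨η, hη, hnear⟩ := Metric.eventually_nhds_iff.1 hnear.bound
  refine ⟨K + |B| * (1 / η + 1) ^ M, fun d hd => ?_⟩
  rcases lt_or_ge |d| η with hlt | hge
  · calc |f d| ≤ K * |d| ^ n := by simpa using hnear (by simpa using hlt)
      _ ≤ _ := by gcongr <;> exact le_add_of_nonneg_right (by positivity)
  · have hone : 1 + |d| ≤ (1 / η + 1) * |d| := by
      rw [add_mul, one_mul, div_mul_eq_mul_div, one_mul]
      gcongr
      exact (one_le_div hη).2 hge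
    calc |f d| ≤ |B| * (1 + |d|) ^ M := (hgrowth d hd).trans (by gcongr; exact le_abs_self B)
      _ ≤ |B| * ((1 / η + 1) * |d|) ^ M := by gcongr
      _ = |B| * (1 / η + 1) ^ M * |d| ^ M := by rw [mul_pow, mul_assoc]
      _ ≤ _ := by
        gcongr
        · exact le_add_of_nonneg_left hK
        · exact le_add_of_nonneg_left (by positivity)

end BinomialExpansion

section MomentSystem

/-- The defect of a sequence `m` in the `k`-th moment equation
`E[(1 + D) ^ ν * D ^ k] = E[(D + ε) ^ k]`, where `m l` stands for `E[D ^ l]` and `(1 + D) ^ ν` is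
replaced by the part of its binomial series that only involves moments of order less than `N`. -/
noncomputable def momentDefect (ν ε : ℝ) (N k : ℕ) (m : ℕ → ℝ) : ℝ :=
  ∑ j ∈ range (N - k), Ring.choose ν j * m (k + j) -
    ∑ i ∈ range (k + 1), k.choose i * ε ^ (k - i) * m i

lemma momentDefect_sub (ν ε : ℝ) (N k : ℕ) (m m' : ℕ → ℝ) :
    momentDefect ν ε N k (m - m') = momentDefect ν ε N k m - momentDefect ν ε N k m' := by
  simp only [momentDefect, Pi.sub_apply, mul_sub, sum_sub_distrib]
  ring

lemma mul_succ_eq_momentDefect (ν ε : ℝ) {N k : ℕ} (hk : k + 1 < N) (m : ℕ → ℝ) :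
    ν * m (k + 1) = momentDefect ν ε N k m
      - ∑ j ∈ range (N - k - 2), Ring.choose ν (j + 2) * m (k + 2 + j)
      + ∑ i ∈ range k, k.choose i * ε ^ (k - i) * m i := by
  obtain ⟨n, rfl⟩ : ∃ n, N = k + 2 + n := ⟨N - (k + 2), by omega⟩
  rw [momentDefect, show k + 2 + n - k = n + 1 + 1 by omega, sum_range_succ', sum_range_succ',
    sum_range_succ, show n + 1 + 1 - 2 = n by omega]
  simp only [Ring.choose_zero_right, zero_add, Ring.choose_one_right, Nat.choose_self, Nat.sub_self,
    pow_zero, Nat.cast_one, one_mul, add_zero, add_assoc, add_comm (2 : ℕ)]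
  ring

variable {α : Type*} {l : Filter α} {ε : α → ℝ} {ν : ℝ} {N s p : ℕ} {e : α → ℕ → ℝ}

-- In the `k`-th equation the moments of order above `k + 1` have already been treated, and those
-- of order below `k` carry a factor `ε`.
lemma isBigO_pow_succ_of_momentDefect (hν : ν ≠ 0) (hε : ε =O[l] fun _ => (1 : ℝ))
    (hzero : (fun a => e a 0) =O[l] fun a => ε a ^ (s + 1))
    (hdefect : ∀ k, k + 1 < N →
      (fun a => momentDefect ν (ε a) N k (e a)) =O[l] fun a => ε a ^ (s + 1))
    (he : ∀ k < N, (fun a => e a k) =O[l] fun a => ε a ^ s) {k : ℕ} (hk : k < N) :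
    (fun a => e a k) =O[l] fun a => ε a ^ (s + 1) := by
  induction hd : N - k using Nat.strong_induction_on generalizing k with
  | _ d ih =>
    rcases k with _ | k
    · exact hzero
    have hhigher : (fun a => ∑ j ∈ range (N - k - 2), Ring.choose ν (j + 2) * e a (k + 2 + j))
        =O[l] fun a => ε a ^ (s + 1) := by
      refine IsBigO.fun_sum fun j hj => (ih _ ?_ ?_ rfl).const_mul_left _ <;>
      · have := mem_range.1 hj
        omega
    have hlower : (fun a => ∑ i ∈ range k, k.choose i * ε a ^ (k - i) * e a i)
        =O[l] fun a => ε a ^ (s + 1) := by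
      refine IsBigO.fun_sum fun i hi => ?_
      obtain ⟨n, hn⟩ : ∃ n, k - i = n + 1 := ⟨k - i - 1, by have := mem_range.1 hi; omega⟩
      have hpow : (fun a => ε a ^ n) =O[l] fun _ => (1 : ℝ) := by simpa using hε.pow n
      have := ((hpow.mul (isBigO_refl ε l)).mul
        (he i (by have := mem_range.1 hi; omega))).const_mul_left (k.choose i : ℝ)
      simpa only [hn, pow_succ, one_mul, mul_assoc, mul_comm (ε _)] using this
    refine (isBigO_const_mul_left_iff hν).1 ?_
    exact (((hdefect k hk).sub hhigher).add hlower).congr_left fun a =>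
      (mul_succ_eq_momentDefect ν (ε a) hk (e a)).symm

lemma isBigO_pow_of_momentDefect (hν : ν ≠ 0) (hε : ε =O[l] fun _ => (1 : ℝ))
    (hzero : (fun a => e a 0) =O[l] fun a => ε a ^ p)
    (hdefect : ∀ k, k + 1 < N → (fun a => momentDefect ν (ε a) N k (e a)) =O[l] fun a => ε a ^ p)
    (he : ∀ k < N, (fun a => e a k) =O[l] fun _ => (1 : ℝ)) {k : ℕ} (hk : k < N) :
    (fun a => e a k) =O[l] fun a => ε a ^ p := by
  induction p generalizing k with
  | zero => simpa using he k hk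
  | succ p ih =>
    have hpow := isBigO_pow_pow_of_le hε p.le_succ
    exact isBigO_pow_succ_of_momentDefect hν hε hzero hdefect
      (fun k hk => ih (hzero.trans hpow) (fun k hk => (hdefect k hk).trans hpow) hk) hk

/-- Approximations modulo `ε ^ 4` to the moments `E[D ^ l]`, where `D` is the relative deviation
`i / x - 1` under the CMP distribution and `ε = 1 / x`. The coefficients solve the equations
`momentDefect ν ε 8 k = 0` for `k < 7` modulo `ε ^ 4`. -/
noncomputable def cmpMomentExpansion (ν ε : ℝ) : ℕ → ℝ
  | 0 => 1
  | 1 => (1 - ν) / (2 * ν) * ε + (1 - ν ^ 2) / (24 * ν ^ 2) * ε ^ 2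
      + (1 - ν ^ 2) / (24 * ν ^ 3) * ε ^ 3
  | 2 => 1 / ν * ε + (1 / (4 * ν ^ 2) - 1 / (2 * ν) + 1 / 4) * ε ^ 2
      + (ν ^ 2 - 1) / (24 * ν ^ 2) * ε ^ 3
  | 3 => (5 / (2 * ν ^ 2) - 3 / (2 * ν)) * ε ^ 2
      + (1 / (4 * ν ^ 3) - 3 / (8 * ν ^ 2) + 1 / (4 * ν) - 1 / 8) * ε ^ 3
  | 4 => 3 / ν ^ 2 * ε ^ 2 + (9 / (2 * ν ^ 3) - 5 / ν ^ 2 + 3 / (2 * ν)) * ε ^ 3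
  | 5 => (35 / (2 * ν ^ 3) - 15 / (2 * ν ^ 2)) * ε ^ 3
  | 6 => 15 / ν ^ 3 * ε ^ 3
  | _ => 0

lemma momentDefect_cmpMomentExpansion (hν : ν ≠ 0) {k : ℕ} (hk : k < 7) :
    ∃ q : ℝ → ℝ, Continuous q ∧
      ∀ ε, momentDefect ν ε 8 k (cmpMomentExpansion ν ε) = ε ^ 4 * q ε := by
  interval_cases k
  on_goal 1 => refine ⟨fun _ => 0, by fun_prop, fun ε => ?_⟩
  on_goal 2 => refine ⟨fun _ => 0, by fun_prop, fun ε => ?_⟩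
  on_goal 3 => refine ⟨fun _ => 1 / (12 * ν) - 1 / (12 * ν ^ 3), by fun_prop, fun ε => ?_⟩
  on_goal 4 => refine ⟨fun ε => (1 / (8 * ν) - 1 / (8 * ν ^ 3)) * ε, by fun_prop, fun ε => ?_⟩
  on_goal 5 => refine ⟨fun ε => -1 / ν ^ 3 + (1 / (12 * ν ^ 2) - 1 / 12) * ε
      + (1 / (6 * ν) - 1 / (6 * ν ^ 3)) * ε ^ 2, by fun_prop, fun ε => ?_⟩
  on_goal 6 => refine ⟨fun ε => -45 / (2 * ν ^ 3) - 5 / (2 * ν)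
      + (1 / 4 + 5 / (4 * ν ^ 2) - 5 / (2 * ν ^ 3)) * ε + (5 / (24 * ν ^ 2) - 5 / 24) * ε ^ 2
      + (5 / (24 * ν) - 5 / (24 * ν ^ 3)) * ε ^ 3, by fun_prop, fun ε => ?_⟩
  on_goal 7 => refine ⟨fun ε => -105 / ν ^ 3
      + (-15 / (2 * ν) + 25 / ν ^ 2 - 135 / (2 * ν ^ 3)) * ε
      + (3 / 4 - 1 / (2 * ν) + 15 / (4 * ν ^ 2) - 5 / ν ^ 3) * ε ^ 2
      + (3 / (8 * ν ^ 2) - 3 / 8) * ε ^ 3 + (1 / (4 * ν) - 1 / (4 * ν ^ 3)) * ε ^ 4,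
      by fun_prop, fun ε => ?_⟩
  all_goals
    simp only [momentDefect, ringChoose_eq_prod_div_factorial, sum_range_succ, prod_range_succ,
      sum_range_zero, prod_range_zero, cmpMomentExpansion, Nat.factorial, Nat.choose, Nat.reduceSub,
      Nat.reduceAdd]
    push_cast
    field_simp
    ring

end MomentSystem

section CMPMoments

variable {ν x : ℝ}

lemma momentDefect_cmpMoment (hν : 0 < ν) (hx : 0 < x) (N k : ℕ) :
    momentDefect ν x⁻¹ N k (cmpMoment ν x) =
      ∫ i : ℕ, ((i : ℝ) / x - 1) ^ k *
        (∑ j ∈ range (N - k), Ring.choose ν j * ((i : ℝ) / x - 1) ^ j - ((i : ℝ) / x) ^ ν)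
          ∂cmpMeasure ν x := by
  have hint (j : ℕ) (c : ℝ) :
      Integrable (fun i : ℕ => c * ((i : ℝ) / x - 1) ^ j) (cmpMeasure ν x) :=
    (integrable_div_sub_one_pow hν hx j).const_mul c
  have hpoly : ∑ j ∈ range (N - k), Ring.choose ν j * cmpMoment ν x (k + j) =
      ∫ i : ℕ, ∑ j ∈ range (N - k), Ring.choose ν j * ((i : ℝ) / x - 1) ^ (k + j)
        ∂cmpMeasure ν x := by
    rw [integral_finsetSum _ fun j _ => hint (k + j) _]
    simp_rw [integral_const_mul, cmpMoment]
  have hshift : ∑ i ∈ range (k + 1), k.choose i * x⁻¹ ^ (k - i) * cmpMoment ν x i =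
      ∫ i : ℕ, ((i : ℝ) / x) ^ ν * ((i : ℝ) / x - 1) ^ k ∂cmpMeasure ν x := by
    rw [integral_cmpMeasure_rpow_mul hν hx fun i => ((i : ℝ) / x - 1) ^ k]
    have hbinom (i : ℕ) : (((i + 1 : ℕ) : ℝ) / x - 1) ^ k =
        ∑ j ∈ range (k + 1), k.choose j * x⁻¹ ^ (k - j) * ((i : ℝ) / x - 1) ^ j := by
      rw [show ((i + 1 : ℕ) : ℝ) / x - 1 = ((i : ℝ) / x - 1) + x⁻¹ by push_cast; ring, add_pow]
      exact sum_congr rfl fun j _ => by ring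
    simp_rw [hbinom]
    rw [integral_finsetSum _ fun j _ => hint j _]
    simp_rw [integral_const_mul, cmpMoment]
  rw [momentDefect, hpoly, hshift, ← integral_sub (integrable_finsetSum _ fun j _ => hint _ _)
    (integrable_rpow_mul_div_sub_one_pow hν hx k)]
  refine integral_congr_ae (.of_forall fun i => ?_)
  simp only [pow_add, mul_sub, mul_sum]
  exact congr_arg₂ _ (sum_congr rfl fun j _ => by ring) (mul_comm _ _)

lemma momentDefect_cmpMoment_isBigO (hν : 0 < ν) {N k : ℕ} (hk : k ≤ N) :
    (fun x => momentDefect ν x⁻¹ N k (cmpMoment ν x)) =O[atTop] fun x => (√x)⁻¹ ^ N := by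
  set M := max (N - k) ⌈ν⌉₊
  obtain ⟨C, hC⟩ := exists_abs_le_mul_pow_add_pow
    (one_add_rpow_sub_sum_choose_isBigO ν (N - k))
    (s := Set.Ici (-1)) (M := M) fun d hd => abs_one_add_rpow_sub_sum_choose_le hν.le
      (le_max_left _ _) ((Nat.le_ceil ν).trans (by exact_mod_cast le_max_right _ _)) hd
  have habs (x : ℝ) (hx : 0 < x) (n : ℕ) :
      Integrable (fun i : ℕ => |(i : ℝ) / x - 1| ^ n) (cmpMeasure ν x) := by
    simpa only [abs_pow] using (integrable_div_sub_one_pow hν hx n).abs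
  have hbound : ∀ᶠ x : ℝ in atTop, ‖momentDefect ν x⁻¹ N k (cmpMoment ν x)‖ ≤
      C * (∫ i : ℕ, |(i : ℝ) / x - 1| ^ N ∂cmpMeasure ν x
        + ∫ i : ℕ, |(i : ℝ) / x - 1| ^ (k + M) ∂cmpMeasure ν x) := by
    filter_upwards [eventually_gt_atTop 0] with x hx
    rw [momentDefect_cmpMoment hν hx, ← integral_add (habs x hx _) (habs x hx _),
      ← integral_const_mul]
    refine norm_integral_le_of_norm_le (((habs x hx _).add (habs x hx _)).const_mul C)
      (.of_forall fun i => ?_)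
    have hd : -1 ≤ (i : ℝ) / x - 1 := by linarith [div_nonneg i.cast_nonneg hx.le]
    have htaylor := hC _ hd
    rw [add_sub_cancel, abs_sub_comm] at htaylor
    calc _ ≤ |(i : ℝ) / x - 1| ^ k *
          (C * (|(i : ℝ) / x - 1| ^ (N - k) + |(i : ℝ) / x - 1| ^ M)) := by
          rw [norm_mul, norm_pow, Real.norm_eq_abs, Real.norm_eq_abs]
          gcongr
      _ = _ := by rw [mul_left_comm, mul_add, ← pow_add, ← pow_add, Nat.add_sub_cancel' hk]
  have hinv : (fun x : ℝ => (√x)⁻¹) =O[atTop] fun _ => (1 : ℝ) :=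
    (tendsto_inv_atTop_zero.comp Real.tendsto_sqrt_atTop).isBigO_one ℝ
  have hsmall := isBigO_pow_pow_of_le hinv (by omega : N ≤ k + M)
  refine (IsBigO.of_norm_eventuallyLE hbound).trans (((integral_abs_div_sub_one_pow_isBigO hν N).add
    ((integral_abs_div_sub_one_pow_isBigO hν (k + M)).trans hsmall)).const_mul_left C)

lemma cmpMoment_sub_cmpMomentExpansion_isBigO (hν : 0 < ν) {k : ℕ} (hk : k < 8) :
    (fun x => cmpMoment ν x k - cmpMomentExpansion ν x⁻¹ k) =O[atTop] fun x => x⁻¹ ^ 4 := by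
  have hinv : Tendsto (fun x : ℝ => x⁻¹) atTop (𝓝 0) := tendsto_inv_atTop_zero
  have hzero : (fun x => cmpMoment ν x 0 - cmpMomentExpansion ν x⁻¹ 0) =O[atTop]
      fun x => x⁻¹ ^ 4 := by
    refine (isBigO_zero _ _).congr' ?_ .rfl
    filter_upwards [eventually_gt_atTop 0] with x hx
    rw [cmpMoment_zero hν hx, cmpMomentExpansion, sub_self]
  have hdefect (k : ℕ) (hk : k + 1 < 8) :
      (fun x => momentDefect ν x⁻¹ 8 k (cmpMoment ν x - cmpMomentExpansion ν x⁻¹)) =O[atTop]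
        fun x => x⁻¹ ^ 4 := by
    simp_rw [momentDefect_sub]
    refine .sub ?_ ?_
    · refine (momentDefect_cmpMoment_isBigO hν (by omega : k ≤ 8)).congr' .rfl ?_
      filter_upwards [eventually_ge_atTop 0] with x hx
      rw [show 8 = 2 * 4 from rfl, pow_mul, inv_pow, Real.sq_sqrt hx]
    · obtain ⟨q, hq, hdefect⟩ := momentDefect_cmpMomentExpansion hν.ne' (by omega : k < 7)
      simp_rw [hdefect]
      have hq_bounded : (fun x : ℝ => q x⁻¹) =O[atTop] fun _ => (1 : ℝ) :=
        ((hq.tendsto 0).comp hinv).isBigO_one ℝ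
      simpa only [mul_one] using (isBigO_refl (fun x : ℝ => x⁻¹ ^ 4) atTop).mul hq_bounded
  have hbounded (k : ℕ) (hk : k < 8) :
      (fun x => (cmpMoment ν x - cmpMomentExpansion ν x⁻¹) k) =O[atTop] fun _ => (1 : ℝ) := by
    refine (cmpMoment_isBigO_one hν k).sub ?_
    have hcont : Continuous fun ε => cmpMomentExpansion ν ε k := by
      unfold cmpMomentExpansion
      split <;> fun_prop
    exact ((hcont.tendsto 0).comp hinv).isBigO_one ℝ
  exact isBigO_pow_of_momentDefect hν.ne' (hinv.isBigO_one ℝ) hzero hdefect hbounded hk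

end CMPMoments

section Integration

lemma nonneg_of_hasDerivAt_nonpos_of_tendsto_zero {f f' : ℝ → ℝ} {a : ℝ}
    (hf : ∀ x ≥ a, HasDerivAt f (f' x) x) (hf' : ∀ x ≥ a, f' x ≤ 0)
    (hlim : Tendsto f atTop (𝓝 0)) {x : ℝ} (hx : a ≤ x) : 0 ≤ f x := by
  have hanti : AntitoneOn f (Set.Ici a) :=
    antitoneOn_of_hasDerivWithinAt_nonpos (convex_Ici a)
      (fun y hy => (hf y hy).continuousAt.continuousWithinAt)
      (fun y hy => (hf y (interior_subset hy)).hasDerivWithinAt)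
      fun y hy => hf' y (interior_subset hy)
  refine le_of_tendsto hlim ?_
  filter_upwards [eventually_ge_atTop x] with y hy
  exact hanti hx (hx.trans hy) hy

lemma isBigO_inv_pow_succ_of_hasDerivAt {f f' : ℝ → ℝ} {n : ℕ}
    (hf : ∀ᶠ x in atTop, HasDerivAt f (f' x) x) (hf' : f' =O[atTop] fun x => x⁻¹ ^ (n + 2))
    (hlim : Tendsto f atTop (𝓝 0)) : f =O[atTop] fun x => x⁻¹ ^ (n + 1) := by
  obtain ⟨C, hC⟩ := hf'.bound
  obtain ⟨a, ha⟩ := eventually_atTop.1 ((hf.and hC).and (eventually_gt_atTop 0))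
  set g : ℝ → ℝ := fun x => C / (n + 1) * x⁻¹ ^ (n + 1)
  have hg (x : ℝ) (hx : a ≤ x) : HasDerivAt g (-(C * x⁻¹ ^ (n + 2))) x := by
    have hx0 : x ≠ 0 := (ha x hx).2.ne'
    refine (((hasDerivAt_inv hx0).pow (n + 1)).const_mul (C / (n + 1))).congr_deriv ?_
    rw [Nat.add_sub_cancel, pow_add _ n 2]
    push_cast
    field_simp
  have hg_lim : Tendsto g atTop (𝓝 0) := by
    have hinv : Tendsto (fun x : ℝ => x⁻¹) atTop (𝓝 0) := tendsto_inv_atTop_zero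
    simpa [g] using (hinv.pow (n + 1)).const_mul (C / (n + 1 : ℝ))
  have hf'_le (x : ℝ) (hx : a ≤ x) : |f' x| ≤ C * x⁻¹ ^ (n + 2) := by
    have hx0 := (ha x hx).2
    simpa [abs_of_pos hx0] using (ha x hx).1.2
  refine IsBigO.of_bound (C / (n + 1)) ?_
  filter_upwards [eventually_ge_atTop a] with x hx
  have hlower : 0 ≤ g x + f x := nonneg_of_hasDerivAt_nonpos_of_tendsto_zero
    (fun y hy => (hg y hy).add (ha y hy).1.1)
    (fun y hy => by linarith [le_abs_self (f' y), hf'_le y hy]) (by simpa using! hg_lim.add hlim) hx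
  have hupper : 0 ≤ g x - f x := nonneg_of_hasDerivAt_nonpos_of_tendsto_zero
    (fun y hy => (hg y hy).sub (ha y hy).1.1)
    (fun y hy => by linarith [neg_abs_le (f' y), hf'_le y hy]) (by simpa using! hg_lim.sub hlim) hx
  rw [Real.norm_eq_abs, Real.norm_of_nonneg (by have := (ha x hx).2; positivity)]
  exact abs_le.2 ⟨by linarith, by linarith⟩

end Integration

lemma exp_sub_quadratic_isBigO {α : Type*} {l : Filter α} {ε s : α → ℝ} {c d : ℝ}
    (hε : Tendsto ε l (𝓝 0))
    (hs : (fun a => s a - (c * ε a + d * ε a ^ 2)) =O[l] fun a => ε a ^ 3) :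
    (fun a => Real.exp (s a) - (1 + c * ε a + (d + c ^ 2 / 2) * ε a ^ 2)) =O[l]
      fun a => ε a ^ 3 := by
  have hε_one : ε =O[l] fun _ => (1 : ℝ) := hε.isBigO_one ℝ
  have hlinear : (fun a => s a - c * ε a) =O[l] fun a => ε a ^ 2 :=
    ((hs.trans (isBigO_pow_pow_of_le hε_one (by norm_num))).add
      (isBigO_const_mul_self d (fun a => ε a ^ 2) l)).congr_left fun a => by ring
  have hs_isBigO : s =O[l] ε :=
    ((hlinear.trans (by simpa using isBigO_pow_pow_of_le hε_one one_le_two)).add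
      (isBigO_const_mul_self c ε l)).congr_left fun a => by ring
  have hexp : (fun a => Real.exp (s a) - (1 + s a + s a ^ 2 / 2)) =O[l] fun a => ε a ^ 3 :=
    (((Real.exp_sub_sum_range_isBigO_pow 3).comp_tendsto (hs_isBigO.trans_tendsto hε)).trans
      (hs_isBigO.pow 3)).congr_left fun a => by simp [sum_range_succ]
  have hsq : (fun a => (s a - c * ε a) * (s a + c * ε a)) =O[l] fun a => ε a ^ 3 :=
    (hlinear.mul (hs_isBigO.add (isBigO_const_mul_self c ε l))).congr_right fun a => by ring
  exact ((hexp.add hs).add (hsq.const_mul_left (1 / 2))).congr_left fun a => by ring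

section NormalizedCmpZ

variable {ν : ℝ}

lemma log_normalizedCmpZ_isBigO (hν : 0 < ν) :
    (fun x => Real.log (normalizedCmpZ ν x) -
      ((ν ^ 2 - 1) / (24 * ν) * x⁻¹ + (ν ^ 2 - 1) / (48 * ν ^ 2) * x⁻¹ ^ 2)) =O[atTop]
      fun x => x⁻¹ ^ 3 := by
  have hderiv : ∀ᶠ x in atTop, HasDerivAt (fun x => Real.log (normalizedCmpZ ν x) -
      ((ν ^ 2 - 1) / (24 * ν) * x⁻¹ + (ν ^ 2 - 1) / (48 * ν ^ 2) * x⁻¹ ^ 2))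
      (ν * (cmpMoment ν x 1 - cmpMomentExpansion ν x⁻¹ 1)) x := by
    filter_upwards [eventually_gt_atTop 0] with x hx
    have hinv := hasDerivAt_inv hx.ne'
    refine ((log_normalizedCmpZ_hasDerivAt hν hx).sub
      ((hinv.const_mul _).add ((hinv.pow 2).const_mul _))).congr_deriv ?_
    simp only [cmpMomentExpansion, Nat.reduceSub, pow_one]
    field_simp
    ring
  have hlim : Tendsto (fun x => Real.log (normalizedCmpZ ν x) -
      ((ν ^ 2 - 1) / (24 * ν) * x⁻¹ + (ν ^ 2 - 1) / (48 * ν ^ 2) * x⁻¹ ^ 2)) atTop (𝓝 0) := by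
    have hinv : Tendsto (fun x : ℝ => x⁻¹) atTop (𝓝 0) := tendsto_inv_atTop_zero
    simpa using ((tendsto_normalizedCmpZ hν).log one_ne_zero).sub
      ((hinv.const_mul _).add ((hinv.pow 2).const_mul _))
  exact isBigO_inv_pow_succ_of_hasDerivAt hderiv
    ((cmpMoment_sub_cmpMomentExpansion_isBigO hν (by norm_num)).const_mul_left ν) hlim

lemma normalizedCmpZ_sub_isBigO (hν : 0 < ν) :
    (fun x => normalizedCmpZ ν x - (1 + ((ν ^ 2 - 1) / 24) * (ν * x)⁻¹ +
      ((ν ^ 2 - 1) * (ν ^ 2 + 23) / 1152) * ((ν * x) ^ 2)⁻¹)) =O[atTop] fun x => x⁻¹ ^ 3 := by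
  refine (exp_sub_quadratic_isBigO tendsto_inv_atTop_zero (log_normalizedCmpZ_isBigO hν)).congr'
    ?_ .rfl
  filter_upwards [eventually_gt_atTop 0] with x hx
  rw [Real.exp_log (normalizedCmpZ_pos hν hx)]
  field_simp
  ring

lemma normalizedCmpZ_rpow_one_div (hν : ν ≠ 0) {lam : ℝ} (hlam : 0 ≤ lam) :
    normalizedCmpZ ν (lam ^ (1 / ν)) = cmpZ lam ν * lam ^ ((ν - 1) / (2 * ν)) *
      (2 * Real.pi) ^ ((ν - 1) / 2) * √ν * Real.exp (-(ν * lam ^ (1 / ν))) := by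
  rw [normalizedCmpZ, ← Real.rpow_mul hlam, ← Real.rpow_mul hlam, one_div_mul_cancel hν,
    Real.rpow_one, one_div_mul_eq_div, div_div]

end NormalizedCmpZ

/-- Second-order asymptotics of the CMP normalizing constant:
`Z(λ,ν) = exp(ν λ^{1/ν}) / (λ^{(ν-1)/(2ν)} (2π)^{(ν-1)/2} √ν)
          (1 + c₁ (ν λ^{1/ν})⁻¹ + c₂ (ν λ^{1/ν})⁻² + O(λ^{-3/ν}))` as `λ → ∞`,
with `c₁ = (ν²-1)/24` and `c₂ = (ν²-1)(ν²+23)/1152`. -/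
theorem cmpZ_second_order_asymptotic (ν : ℝ) (hν : 0 < ν) :
    ∃ C > (0 : ℝ), ∃ Λ > (0 : ℝ), ∀ lam : ℝ, lam ≥ Λ →
      |cmpZ lam ν * lam ^ ((ν - 1) / (2 * ν)) * (2 * Real.pi) ^ ((ν - 1) / 2) *
          Real.sqrt ν * Real.exp (-(ν * lam ^ (1 / ν))) -
        (1 + ((ν ^ 2 - 1) / 24) * (ν * lam ^ (1 / ν))⁻¹ +
          ((ν ^ 2 - 1) * (ν ^ 2 + 23) / 1152) * ((ν * lam ^ (1 / ν)) ^ 2)⁻¹)|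
        ≤ C * lam ^ (-(3 / ν)) := by
  have hrpow : Tendsto (fun lam : ℝ => lam ^ (1 / ν)) atTop atTop :=
    tendsto_rpow_atTop (one_div_pos.2 hν)
  obtain ⟨C, hC, hbound⟩ := ((normalizedCmpZ_sub_isBigO hν).comp_tendsto hrpow).exists_pos
  obtain ⟨Λ, hΛ⟩ := eventually_atTop.1 (hbound.bound.and (eventually_gt_atTop 0))
  refine ⟨C, hC, Λ, (hΛ Λ le_rfl).2, fun lam hlam => ?_⟩
  obtain ⟨hle, hpos⟩ := hΛ lam hlam
  have hpow : ‖(lam ^ (1 / ν))⁻¹ ^ 3‖ = lam ^ (-(3 / ν)) := by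
    rw [Real.norm_of_nonneg (by positivity), ← Real.rpow_neg hpos.le,
      ← Real.rpow_mul_natCast hpos.le]
    congr 1
    ring
  simpa only [Function.comp_apply, normalizedCmpZ_rpow_one_div hν.ne' hpos.le, Real.norm_eq_abs,
    hpow] using hle
end

section
/- Let h : ℝ → ℝ be an even function (h(x) = h(−x) for all x ∈ ℝ) that is twice differentiable with first and second derivatives bounded on ℝ. Then as α → ∞, E[h((X_α − α)/√α)] = E[h(Z)] + O(α^(−1)), where X_α has the Poisson distribution with mean α and Z is standard normal. Precisely: there exist constants C > 0 and A > 0 (depending only on h) such that for all α ≥ A, |Σ_{n=0}^∞ e^(−α)·α^n/n! · h((n−α)/√α) − ∫_ℝ h(z) dγ(z)| ≤ C·α^(−1), where γ is the standard Gaussian measure N(0,1) on ℝ. -/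
open scoped BigOperators

open Filter Topology MeasureTheory ProbabilityTheory Set
open scoped NNReal

/-!
Stein's method, carried to second order. For a test function `h` let `f` be the solution of
`f' - x f = h - E h(Z)` that decays against the Gaussian density; a barrier argument bounds `f`
and its first three derivatives. The standardized Poisson variable `X` satisfies
`E[X f(X)] = δ⁻¹ E[f(X + δ) - f(X)]` with `δ = 1 / √α`, so Taylor expansion gives
`E h(X) - E h(Z) = -(δ / 2) E f''(X) + O(δ²)`. The first-order version of the same estimate, applied
to the Lipschitz function `f''`, replaces `E f''(X)` by `E f''(Z)` at the cost of another `O(δ²)`.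
Finally `E f''(Z) = -(1 / 3) E[h(Z) (Z³ - 3 Z)]`, which vanishes when `h` is even.
-/

local notation "γ" => gaussianReal 0 1

local notation "φ" => gaussianPDFReal 0 1

section Calculus

lemma abs_le_add_mul_abs_of_abs_deriv_le {v : ℝ → ℝ} {K : ℝ} (hv : Differentiable ℝ v)
    (hK : ∀ x, |deriv v x| ≤ K) (x : ℝ) : |v x| ≤ |v 0| + K * |x| := by
  have lipschitz : |v x - v 0| ≤ K * |x| := by
    simpa using convex_univ.norm_image_sub_le_of_norm_deriv_le (fun y _ ↦ hv y)
      (fun y _ ↦ hK y) (mem_univ 0) (mem_univ x)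
  linarith [abs_sub_abs_le_abs_sub (v x) (v 0)]

lemma integrable_of_abs_deriv_le {μ : Measure ℝ} [IsFiniteMeasure μ]
    (hμ : Integrable (fun x ↦ x) μ) {v : ℝ → ℝ} {K : ℝ} (hv : Differentiable ℝ v)
    (hK : ∀ x, |deriv v x| ≤ K) : Integrable v μ :=
  ((integrable_const |v 0|).add (hμ.abs.const_mul K)).mono' hv.continuous.aestronglyMeasurable
    (ae_of_all _ (abs_le_add_mul_abs_of_abs_deriv_le hv hK))

lemma exists_forall_abs_le_of_forall_one_le_abs {f : ℝ → ℝ} {c : ℝ} (hf : Continuous f)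
    (hc : ∀ x, 1 ≤ |x| → |f x| ≤ c) : ∃ B, ∀ x, |f x| ≤ B := by
  have isBigO_one : f =O[cocompact ℝ] (1 : ℝ → ℝ) := by
    refine .of_bound c ?_
    filter_upwards [(tendsto_norm_cocompact_atTop (E := ℝ)).eventually_ge_atTop 1] with x hx
    simpa using hc x hx
  obtain ⟨B, hB⟩ :=
    isBounded_iff_forall_norm_le.1 (hf.isBounded_range_iff_isBigO.2 isBigO_one)
  exact ⟨B, fun x ↦ hB _ (mem_range_self x)⟩

lemma abs_sub_sum_iteratedDeriv_le (n : ℕ) {f : ℝ → ℝ} {D : ℝ}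
    (hf : ∀ k ≤ n, Differentiable ℝ (iteratedDeriv k f))
    (hD : ∀ x, |iteratedDeriv (n + 1) f x| ≤ D) (x : ℝ) {t : ℝ} (ht : 0 ≤ t) :
    |f (x + t) - ∑ k ∈ Finset.range (n + 1), t ^ k / k.factorial * iteratedDeriv k f x| ≤
      D * (t ^ (n + 1) / (n + 1).factorial) := by
  have hasDerivAt_pow_div_factorial (k : ℕ) (s : ℝ) :
      HasDerivAt (fun s : ℝ ↦ s ^ (k + 1) / (k + 1).factorial) (s ^ k / k.factorial) s := by
    refine ((hasDerivAt_pow (k + 1) s).div_const _).congr_deriv ?_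
    rw [Nat.factorial_succ]
    push_cast
    field_simp
  have differentiable_f : Differentiable ℝ f := by simpa using hf 0 n.zero_le
  induction n generalizing f t with
  | zero =>
    have := convex_univ.norm_image_sub_le_of_norm_deriv_le (fun y _ ↦ differentiable_f y)
      (fun y _ ↦ by simpa using hD y) (mem_univ x) (mem_univ (x + t))
    simpa [abs_of_nonneg ht] using this
  | succ n ih =>
    have hasDerivAt_remainder (s : ℝ) :
        HasDerivAt (fun s ↦ f (x + s) -
            ∑ k ∈ Finset.range (n + 2), s ^ k / k.factorial * iteratedDeriv k f x)
          (deriv f (x + s) -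
            ∑ k ∈ Finset.range (n + 1), s ^ k / k.factorial * iteratedDeriv k (deriv f) x) s := by
      simp only [Finset.sum_range_succ' _ (n + 1), iteratedDeriv_succ', pow_zero]
      exact ((differentiable_f _).hasDerivAt.comp_const_add x s).sub
        ((HasDerivAt.fun_sum fun k _ ↦
          (hasDerivAt_pow_div_factorial k s).mul_const _).add_const _)
    have bound_deriv (s : ℝ) (hs : 0 ≤ s) := ih
      (fun k hk ↦ by simpa [iteratedDeriv_succ'] using hf (k + 1) (by lia))
      (fun y ↦ by simpa [iteratedDeriv_succ'] using hD y) hs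
      (by simpa [iteratedDeriv_succ'] using hf 1 (by lia))
    exact image_norm_le_of_norm_deriv_right_le_deriv_boundary
      (fun s _ ↦ (hasDerivAt_remainder s).continuousAt.continuousWithinAt)
      (fun s _ ↦ (hasDerivAt_remainder s).hasDerivWithinAt)
      (by simp [Finset.sum_range_succ'])
      (fun s ↦ (hasDerivAt_pow_div_factorial (n + 1) s).const_mul D)
      (fun s hs ↦ bound_deriv s hs.1) (right_mem_Icc.2 ht)

lemma abs_sum_iteratedDeriv_sub_slope_le (n : ℕ) {f : ℝ → ℝ} {D : ℝ}
    (hf : ∀ k ≤ n, Differentiable ℝ (iteratedDeriv k f))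
    (hD : ∀ x, |iteratedDeriv (n + 1) f x| ≤ D) (x : ℝ) {t : ℝ} (ht : 0 < t) :
    |∑ k ∈ Finset.range n, t ^ k / (k + 1).factorial * iteratedDeriv (k + 1) f x -
      t⁻¹ * (f (x + t) - f x)| ≤ D * (t ^ n / (n + 1).factorial) := by
  have scaled_remainder :
      ∑ k ∈ Finset.range n, t ^ k / (k + 1).factorial * iteratedDeriv (k + 1) f x -
        t⁻¹ * (f (x + t) - f x) = -(t⁻¹ * (f (x + t) -
          ∑ k ∈ Finset.range (n + 1), t ^ k / k.factorial * iteratedDeriv k f x)) := by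
    have scaled_term (k : ℕ) : t ^ k / (k + 1).factorial * iteratedDeriv (k + 1) f x =
        t⁻¹ * (t ^ (k + 1) / (k + 1).factorial * iteratedDeriv (k + 1) f x) := by field
    rw [Finset.sum_range_succ', Finset.sum_congr rfl fun k _ ↦ scaled_term k, ← Finset.mul_sum,
      iteratedDeriv_zero, pow_zero, Nat.factorial_zero, Nat.cast_one]
    ring
  rw [scaled_remainder, abs_neg, abs_mul, abs_of_pos (inv_pos.2 ht)]
  calc t⁻¹ * |f (x + t) - ∑ k ∈ Finset.range (n + 1), t ^ k / k.factorial * iteratedDeriv k f x|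
    _ ≤ t⁻¹ * (D * (t ^ (n + 1) / (n + 1).factorial)) := by
      gcongr; exact abs_sub_sum_iteratedDeriv_le n hf hD x ht.le
    _ = D * (t ^ n / (n + 1).factorial) := by field

end Calculus

section Gaussian

lemma gaussianPDFReal_zero_one (x : ℝ) : φ x = (√(2 * Real.pi))⁻¹ * Real.exp (-x ^ 2 / 2) := by
  simp [gaussianPDFReal]

lemma hasDerivAt_gaussianPDFReal_zero_one (x : ℝ) : HasDerivAt φ (-(x * φ x)) x := by
  have hasDerivAt_exponent : HasDerivAt (fun x : ℝ ↦ -x ^ 2 / 2) (-x) x :=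
    ((hasDerivAt_pow 2 x).neg.div_const 2).congr_deriv (by push_cast; ring)
  rw [funext gaussianPDFReal_zero_one]
  exact (hasDerivAt_exponent.exp.const_mul _).congr_deriv (by ring)

lemma tendsto_abs_pow_mul_gaussianPDFReal_zero_one (n : ℕ) :
    Tendsto (fun x ↦ |x| ^ n * φ x) (cocompact ℝ) (𝓝 0) := by
  have := (tendsto_rpow_abs_mul_exp_neg_mul_sq_cocompact (a := 1 / 2) (by norm_num) n).const_mul
    (√(2 * Real.pi))⁻¹
  rw [mul_zero] at this
  refine this.congr fun x ↦ ?_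
  rw [gaussianPDFReal_zero_one, Real.rpow_natCast, show -(1 / 2) * x ^ 2 = -x ^ 2 / 2 by ring]
  ring

lemma tendsto_mul_gaussianPDFReal_zero_one_of_abs_le {g : ℝ → ℝ} {a b : ℝ}
    (hg : ∀ x, |g x| ≤ a + b * |x|) : Tendsto (fun x ↦ g x * φ x) (cocompact ℝ) (𝓝 0) := by
  have dominating : Tendsto (fun x ↦ a * (|x| ^ 0 * φ x) + b * (|x| ^ 1 * φ x))
      (cocompact ℝ) (𝓝 0) := by
    simpa using ((tendsto_abs_pow_mul_gaussianPDFReal_zero_one 0).const_mul a).add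
      ((tendsto_abs_pow_mul_gaussianPDFReal_zero_one 1).const_mul b)
  refine squeeze_zero_norm (fun x ↦ ?_) dominating
  have φ_nonneg := gaussianPDFReal_nonneg 0 1 x
  calc ‖g x * φ x‖ = |g x| * φ x := by rw [norm_mul, Real.norm_eq_abs, Real.norm_of_nonneg φ_nonneg]
    _ ≤ (a + b * |x|) * φ x := by gcongr; exact hg x
    _ = a * (|x| ^ 0 * φ x) + b * (|x| ^ 1 * φ x) := by ring

lemma integrable_gaussianReal_iff {μ : ℝ} {v : ℝ≥0} (hv : v ≠ 0) {g : ℝ → ℝ} :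
    Integrable g (gaussianReal μ v) ↔ Integrable fun x ↦ g x * gaussianPDFReal μ v x := by
  rw [gaussianReal_of_var_ne_zero μ hv, integrable_withDensity_iff (measurable_gaussianPDF μ v)
    (ae_of_all _ fun _ ↦ gaussianPDF_lt_top)]
  simp only [toReal_gaussianPDF]

lemma integral_gaussianReal_eq_integral_mul {μ : ℝ} {v : ℝ≥0} (hv : v ≠ 0) (g : ℝ → ℝ) :
    ∫ x, g x ∂gaussianReal μ v = ∫ x, g x * gaussianPDFReal μ v x := by
  simp only [integral_gaussianReal_eq_integral_smul hv, smul_eq_mul, mul_comm]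

lemma integral_gaussianReal_zero_one (g : ℝ → ℝ) : ∫ x, g x ∂γ =
    ∫ z, g z * ((2 * Real.pi) ^ (-(1 : ℝ) / 2) * Real.exp (-z ^ 2 / 2)) := by
  simp only [integral_gaussianReal_eq_integral_mul one_ne_zero, gaussianPDFReal_zero_one, neg_div,
    Real.rpow_neg Real.two_pi_pos.le, Real.sqrt_eq_rpow]

lemma integrable_pow_gaussianReal (μ : ℝ) (v : ℝ≥0) (n : ℕ) :
    Integrable (fun x ↦ x ^ n) (gaussianReal μ v) := by
  refine ((memLp_id_gaussianReal n).integrable_norm_pow').mono' (by fun_prop)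
    (ae_of_all _ fun x ↦ ?_)
  simp

instance (v : ℝ≥0) : (gaussianReal 0 v).IsNegInvariant :=
  ⟨gaussianReal_map_neg.trans (by rw [neg_zero])⟩

lemma integral_gaussianReal_eq_zero_of_odd {g : ℝ → ℝ} (v : ℝ≥0) (hg : g.Odd) :
    ∫ x, g x ∂gaussianReal 0 v = 0 := by
  have reflected := integral_neg_eq_self g (gaussianReal 0 v)
  simp only [hg _, integral_neg] at reflected
  linarith

lemma integral_gaussianReal_eq_zero_of_hasDerivAt {g w : ℝ → ℝ}
    (hg : ∀ x, HasDerivAt g (x * g x + w x) x) (hgi : Integrable g γ) (hwi : Integrable w γ) :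
    ∫ x, w x ∂γ = 0 := by
  rw [integral_gaussianReal_eq_integral_mul one_ne_zero]
  rw [integrable_gaussianReal_iff one_ne_zero] at hgi hwi
  refine integral_eq_zero_of_hasDerivAt_of_integrable (fun x ↦ ?_) hwi hgi
  exact ((hg x).mul (hasDerivAt_gaussianPDFReal_zero_one x)).congr_deriv (by ring)

end Gaussian

section SteinEquation

/-- The functions `f : ℝ → ℝ` that are `n` times differentiable with `f, f', …, f⁽ⁿ⁾` all bounded.
This is the regularity that Taylor expansion of a Stein solution requires; the top derivative need
not be continuous, so `f` need not be `C^n`. -/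
structure HasBoundedDerivs (n : ℕ) (f : ℝ → ℝ) : Prop where
  differentiable : ∀ k < n, Differentiable ℝ (iteratedDeriv k f)
  bounded : ∀ k ≤ n, ∃ D, ∀ x, |iteratedDeriv k f x| ≤ D

lemma HasBoundedDerivs.succ {n : ℕ} {f : ℝ → ℝ} {D : ℝ} (hf : Differentiable ℝ f)
    (hD : ∀ x, |f x| ≤ D) (hf' : HasBoundedDerivs n (deriv f)) : HasBoundedDerivs (n + 1) f where
  differentiable
    | 0, _ => by simpa using hf
    | k + 1, hk => by simpa [iteratedDeriv_succ'] using hf'.differentiable k (by lia)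
  bounded
    | 0, _ => ⟨D, by simpa using hD⟩
    | k + 1, hk => by simpa [iteratedDeriv_succ'] using hf'.bounded k (by lia)

lemma HasBoundedDerivs.mono {m n : ℕ} {f : ℝ → ℝ} (hf : HasBoundedDerivs n f) (hmn : m ≤ n) :
    HasBoundedDerivs m f where
  differentiable k hk := hf.differentiable k (hk.trans_le hmn)
  bounded k hk := hf.bounded k (hk.trans hmn)

lemma HasBoundedDerivs.integrable_iteratedDeriv {n : ℕ} {f : ℝ → ℝ}
    (hf : HasBoundedDerivs (n + 1) f) {k : ℕ} (hk : k ≤ n + 1) (μ : Measure ℝ)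
    [IsFiniteMeasure μ] : Integrable (iteratedDeriv k f) μ := by
  obtain ⟨D, hD⟩ := hf.bounded k hk
  refine .of_bound ?_ D (ae_of_all _ hD)
  cases k with
  | zero => exact (hf.differentiable 0 n.succ_pos).continuous.aestronglyMeasurable
  | succ k => rw [iteratedDeriv_succ]; exact (measurable_deriv _).aestronglyMeasurable

lemma HasBoundedDerivs.integrable_pow_mul_iteratedDeriv {n : ℕ} {f : ℝ → ℝ}
    (hf : HasBoundedDerivs (n + 1) f) {k : ℕ} (hk : k ≤ n + 1) (m : ℕ) (μ : ℝ)
    (v : ℝ≥0) : Integrable (fun x ↦ x ^ m * iteratedDeriv k f x) (gaussianReal μ v) := by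
  obtain ⟨D, hD⟩ := hf.bounded k hk
  exact (integrable_pow_gaussianReal μ v m).mul_bdd
    (hf.integrable_iteratedDeriv hk _).aestronglyMeasurable (ae_of_all _ hD)

/-- `f` is the solution of the Stein equation `f' - x f = v` of the standard Gaussian, which turns
`E v(X)` into `E[f'(X) - X f(X)]`. The decay condition singles it out among the solutions, which
differ by multiples of `1 / φ`. -/
structure IsSteinSolution (v f : ℝ → ℝ) : Prop where
  differentiable : Differentiable ℝ f
  deriv_eq : ∀ x, deriv f x = x * f x + v x
  tendsto_mul_pdf : Tendsto (fun x ↦ f x * φ x) (cocompact ℝ) (𝓝 0)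

lemma exists_isSteinSolution {v : ℝ → ℝ} (hv : Continuous v) (hvi : Integrable v γ)
    (hv₀ : ∫ x, v x ∂γ = 0) : ∃ f, IsSteinSolution v f := by
  rw [integrable_gaussianReal_iff one_ne_zero] at hvi
  rw [integral_gaussianReal_eq_integral_mul one_ne_zero] at hv₀
  have φ_ne_zero (x : ℝ) : φ x ≠ 0 := (gaussianPDFReal_pos 0 1 x one_ne_zero).ne'
  have continuous_φ : Continuous φ :=
    continuous_iff_continuousAt.2 fun x ↦ (hasDerivAt_gaussianPDFReal_zero_one x).continuousAt
  let I (x : ℝ) : ℝ := ∫ y in Iic x, v y * φ y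
  have hasDerivAt_I (x : ℝ) : HasDerivAt I (v x * φ x) x := by
    have I_eq (y : ℝ) : I y = I 0 + ∫ z in (0 : ℝ)..y, v z * φ z := by
      rw [← intervalIntegral.integral_Iic_sub_Iic hvi.integrableOn hvi.integrableOn]
      ring
    rw [funext I_eq]
    exact (((hv.mul continuous_φ).integral_hasStrictDerivAt 0 x).hasDerivAt).const_add _
  have tendsto_I : Tendsto I (cocompact ℝ) (𝓝 0) := by
    rw [cocompact_eq_atBot_atTop, tendsto_sup]
    refine ⟨tendsto_integral_Iic_zero tendsto_id, ?_⟩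
    simpa [hv₀] using (aecover_Iic tendsto_id).integral_tendsto_of_countably_generated hvi
  have hasDerivAt_quotient (x : ℝ) :
      HasDerivAt (fun x ↦ I x / φ x) (x * (I x / φ x) + v x) x := by
    refine ((hasDerivAt_I x).div (hasDerivAt_gaussianPDFReal_zero_one x)
      (φ_ne_zero x)).congr_deriv ?_
    field [φ_ne_zero x]
  exact ⟨fun x ↦ I x / φ x, fun x ↦ (hasDerivAt_quotient x).differentiableAt,
    fun x ↦ (hasDerivAt_quotient x).deriv,
    tendsto_I.congr fun x ↦ (div_mul_cancel₀ _ (φ_ne_zero x)).symm⟩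

namespace IsSteinSolution

variable {v f : ℝ → ℝ}

protected lemma hasDerivAt (hf : IsSteinSolution v f) (x : ℝ) : HasDerivAt f (x * f x + v x) x :=
  hf.deriv_eq x ▸ (hf.differentiable x).hasDerivAt

protected lemma neg (hf : IsSteinSolution v f) : IsSteinSolution (-v) (-f) where
  differentiable := hf.differentiable.neg
  deriv_eq x := by simp only [deriv.neg, hf.deriv_eq, Pi.neg_apply]; ring
  tendsto_mul_pdf := by simpa using hf.tendsto_mul_pdf.neg

lemma comp_neg (hf : IsSteinSolution v f) :
    IsSteinSolution (fun x ↦ -v (-x)) (fun x ↦ f (-x)) where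
  differentiable := hf.differentiable.comp differentiable_neg
  deriv_eq x := by simp only [deriv_comp_neg, hf.deriv_eq]; ring
  tendsto_mul_pdf := by
    simpa [gaussianPDFReal_zero_one, Function.comp_def] using
      hf.tendsto_mul_pdf.comp (Homeomorph.neg ℝ).isClosedEmbedding.tendsto_cocompact

lemma le_of_forall_ge (hf : IsSteinSolution v f) {x₀ c : ℝ} (hv : ∀ x, x₀ ≤ x → -(c * x) ≤ v x) :
    f x₀ ≤ c := by
  -- `(f - c) φ` increases to `0` on `[x₀, ∞)`, hence is nonpositive at `x₀`.
  have hasDerivAt_mul_pdf (x : ℝ) : HasDerivAt (fun x ↦ (f x - c) * φ x) ((v x + c * x) * φ x) x :=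
    (((hf.hasDerivAt x).sub_const c).mul (hasDerivAt_gaussianPDFReal_zero_one x)).congr_deriv
      (by ring)
  have monotone_mul_pdf : MonotoneOn (fun x ↦ (f x - c) * φ x) (Ici x₀) := by
    refine monotoneOn_of_hasDerivWithinAt_nonneg (convex_Ici x₀)
      (fun x _ ↦ (hasDerivAt_mul_pdf x).continuousAt.continuousWithinAt)
      (fun x _ ↦ (hasDerivAt_mul_pdf x).hasDerivWithinAt) fun x hx ↦ ?_
    rw [interior_Ici, mem_Ioi] at hx
    exact mul_nonneg (by linarith [hv x hx.le]) (gaussianPDFReal_nonneg 0 1 x)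
  have tendsto_mul_pdf : Tendsto (fun x ↦ (f x - c) * φ x) atTop (𝓝 0) := by
    have := (hf.tendsto_mul_pdf.sub
      (tendsto_mul_gaussianPDFReal_zero_one_of_abs_le (g := fun _ ↦ c) (a := |c|) (b := 0)
        (by simp))).mono_left atTop_le_cocompact
    simpa only [sub_mul, sub_zero] using this
  have nonpos : (f x₀ - c) * φ x₀ ≤ 0 := ge_of_tendsto tendsto_mul_pdf <|
    (eventually_ge_atTop x₀).mono fun x hx ↦ monotone_mul_pdf self_mem_Ici hx hx
  exact sub_nonpos.1 (nonpos_of_mul_nonpos_left nonpos (gaussianPDFReal_pos 0 1 x₀ one_ne_zero))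

protected lemma abs_le (hf : IsSteinSolution v f) {x₀ c : ℝ}
    (hv : ∀ x, |x₀| ≤ |x| → |v x| ≤ c * |x|) : |f x₀| ≤ c := by
  wlog hx₀ : 0 ≤ x₀ generalizing v f x₀
  · simpa using this hf.comp_neg (x₀ := -x₀)
      (fun x hx ↦ by simpa using hv (-x) (by simpa using hx)) (by linarith)
  have abs_le_mul (x : ℝ) (hx : x₀ ≤ x) : |v x| ≤ c * x := by
    have hx' := hx₀.trans hx
    simpa [abs_of_nonneg hx'] using hv x (by rwa [abs_of_nonneg hx₀, abs_of_nonneg hx'])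
  refine abs_le.2 ⟨neg_le.1 (hf.neg.le_of_forall_ge fun x hx ↦ ?_),
    hf.le_of_forall_ge fun x hx ↦ neg_le_of_abs_le (abs_le_mul x hx)⟩
  exact neg_le_neg (le_of_abs_le (abs_le_mul x hx))

lemma exists_abs_le (hf : IsSteinSolution v f) {a b : ℝ} (hv : ∀ x, |v x| ≤ a + b * |x|) :
    ∃ B, ∀ x, |f x| ≤ B := by
  have a_nonneg : 0 ≤ a := by simpa using (abs_nonneg _).trans (hv 0)
  refine exists_forall_abs_le_of_forall_one_le_abs hf.differentiable.continuous (c := a + b)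
    fun x₀ hx₀ ↦ hf.abs_le fun x hx ↦ ?_
  nlinarith [hv x, hx₀.trans hx]

lemma exists_abs_deriv_le (hf : IsSteinSolution v f) {B : ℝ} (hv : ∀ x, |v x| ≤ B) :
    ∃ D, ∀ x, |deriv f x| ≤ D := by
  have abs_mul_le (x : ℝ) : |x * f x| ≤ B := by
    have B_nonneg : 0 ≤ B := (abs_nonneg _).trans (hv 0)
    obtain rfl | hx := eq_or_ne x 0
    · simpa using B_nonneg
    have hx_pos := abs_pos.2 hx
    have : |f x| ≤ B / |x| := hf.abs_le fun y hy ↦ by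
      calc |v y| ≤ B := hv y
        _ = B / |x| * |x| := (div_mul_cancel₀ B hx_pos.ne').symm
        _ ≤ B / |x| * |y| := by gcongr
    rwa [abs_mul, mul_comm, ← le_div_iff₀ hx_pos]
  refine ⟨B + B, fun x ↦ ?_⟩
  rw [hf.deriv_eq]
  exact (abs_add_le _ _).trans (add_le_add (abs_mul_le x) (hv x))

protected lemma deriv (hf : IsSteinSolution v f) (hv : Differentiable ℝ v) {a b B : ℝ}
    (hab : ∀ x, |v x| ≤ a + b * |x|) (hB : ∀ x, |f x| ≤ B) :
    IsSteinSolution (fun x ↦ f x + deriv v x) (deriv f) := by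
  have hasDerivAt_deriv (x : ℝ) :
      HasDerivAt (deriv f) (x * deriv f x + (f x + deriv v x)) x := by
    rw [funext hf.deriv_eq]
    refine (((hasDerivAt_id x).mul (hf.hasDerivAt x)).add (hv x).hasDerivAt).congr_deriv ?_
    simp only [id_eq]
    ring
  refine ⟨fun x ↦ (hasDerivAt_deriv x).differentiableAt, fun x ↦ (hasDerivAt_deriv x).deriv,
    tendsto_mul_gaussianPDFReal_zero_one_of_abs_le (a := a) (b := B + b) fun x ↦ ?_⟩
  calc |deriv f x| = |x * f x + v x| := by rw [hf.deriv_eq]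
    _ ≤ |x| * |f x| + |v x| := by rw [← abs_mul]; exact abs_add_le _ _
    _ ≤ |x| * B + (a + b * |x|) := by gcongr; exacts [hB x, hab x]
    _ = a + (B + b) * |x| := by ring

lemma hasBoundedDerivs_two (hf : IsSteinSolution v f) (hv : Differentiable ℝ v) {K : ℝ}
    (hK : ∀ x, |deriv v x| ≤ K) : HasBoundedDerivs 2 f := by
  have linear_growth := abs_le_add_mul_abs_of_abs_deriv_le hv hK
  obtain ⟨B, hB⟩ := hf.exists_abs_le linear_growth
  have hf' := hf.deriv hv linear_growth hB
  have source_bounded (x : ℝ) : |f x + deriv v x| ≤ B + K :=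
    (abs_add_le _ _).trans (add_le_add (hB x) (hK x))
  obtain ⟨B', hB'⟩ := hf'.exists_abs_le (a := B + K) (b := 0) (by simpa using source_bounded)
  obtain ⟨B'', hB''⟩ := hf'.exists_abs_deriv_le source_bounded
  exact .succ hf.differentiable hB <| .succ hf'.differentiable hB'
    ⟨by simp, fun k hk ↦ ⟨B'', by simpa [Nat.le_zero.1 hk] using hB''⟩⟩

lemma hasBoundedDerivs_three (hf : IsSteinSolution v f) (hv : Differentiable ℝ v)
    (hv' : Differentiable ℝ (deriv v)) {K K' : ℝ} (hK : ∀ x, |deriv v x| ≤ K)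
    (hK' : ∀ x, |deriv (deriv v) x| ≤ K') : HasBoundedDerivs 3 f := by
  have linear_growth := abs_le_add_mul_abs_of_abs_deriv_le hv hK
  obtain ⟨B, hB⟩ := hf.exists_abs_le linear_growth
  have hf_bounded := hf.hasBoundedDerivs_two hv hK
  obtain ⟨B', hB'⟩ := hf_bounded.bounded 1 one_le_two
  refine .succ hf.differentiable hB <| (hf.deriv hv linear_growth hB).hasBoundedDerivs_two
    (hf.differentiable.add hv') (K := B' + K') fun x ↦ ?_
  rw [deriv_fun_add (hf.differentiable x) (hv' x)]
  exact (abs_add_le _ _).trans (add_le_add (by simpa using hB' x) (hK' x))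

lemma integrable_mul_hermite (hf : IsSteinSolution v f) (hf₂ : HasBoundedDerivs 2 f) :
    Integrable (fun x ↦ v x * (x ^ 3 - 3 * x)) γ := by
  have integrable_pow_mul (n : ℕ) : Integrable (fun x ↦ x ^ n * f x) γ := by
    simpa using hf₂.integrable_pow_mul_iteratedDeriv zero_le_two n 0 1
  have integrable_pow_mul_deriv (n : ℕ) : Integrable (fun x ↦ x ^ n * deriv f x) γ := by
    simpa using hf₂.integrable_pow_mul_iteratedDeriv one_le_two n 0 1
  refine (((integrable_pow_mul_deriv 3).sub (integrable_pow_mul 4)).sub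
    (((integrable_pow_mul_deriv 1).sub (integrable_pow_mul 2)).const_mul 3)).congr
    (ae_of_all _ fun x ↦ ?_)
  simp only [Pi.sub_apply, hf.deriv_eq]
  ring

lemma integral_iteratedDeriv_two (hf : IsSteinSolution v f) (hf₂ : HasBoundedDerivs 2 f) :
    ∫ x, iteratedDeriv 2 f x ∂γ = -3⁻¹ * ∫ x, v x * (x ^ 3 - 3 * x) ∂γ := by
  have integrable_iteratedDeriv_two := hf₂.integrable_iteratedDeriv le_rfl γ
  have integrable_mul_hermite := hf.integrable_mul_hermite hf₂
  have integrable_test : Integrable (fun x ↦ x ^ 3 * f x + 3 * deriv f x) γ :=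
    .add (by simpa using hf₂.integrable_pow_mul_iteratedDeriv zero_le_two 3 0 1)
      (by simpa using (hf₂.integrable_iteratedDeriv one_le_two γ).const_mul 3)
  have hasDerivAt_deriv (x : ℝ) : HasDerivAt (deriv f) (iteratedDeriv 2 f x) x := by
    simpa [iteratedDeriv_succ'] using (hf₂.differentiable 1 one_lt_two x).hasDerivAt
  -- The test function `g = x³ f + 3 f'` is chosen so that `f` and `f'` cancel from `g' - x g`.
  have hasDerivAt_test (x : ℝ) : HasDerivAt (fun x ↦ x ^ 3 * f x + 3 * deriv f x)
      (x * (x ^ 3 * f x + 3 * deriv f x) +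
        (3 * iteratedDeriv 2 f x + v x * (x ^ 3 - 3 * x))) x := by
    refine (((hasDerivAt_pow 3 x).mul (hf.hasDerivAt x)).add
      ((hasDerivAt_deriv x).const_mul 3)).congr_deriv ?_
    rw [hf.deriv_eq]
    push_cast
    ring
  have stein := integral_gaussianReal_eq_zero_of_hasDerivAt hasDerivAt_test integrable_test
    ((integrable_iteratedDeriv_two.const_mul 3).add integrable_mul_hermite)
  rw [integral_add (integrable_iteratedDeriv_two.const_mul 3) integrable_mul_hermite,
    integral_const_mul] at stein
  linarith

end IsSteinSolution

end SteinEquation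

section Poisson

variable {α : ℝ≥0}

lemma integrable_natCast_mul_poissonMeasure {F : ℕ → ℝ}
    (hF : Integrable (fun n ↦ F (n + 1)) (poissonMeasure α)) :
    Integrable (fun n ↦ n * F n) (poissonMeasure α) := by
  rw [integrable_poissonMeasure_iff] at hF ⊢
  rw [← summable_nat_add_iff 1]
  refine (hF.mul_left (α : ℝ)).congr fun n ↦ ?_
  rw [norm_mul, Real.norm_natCast, Nat.factorial_succ]
  push_cast
  field

lemma integral_natCast_mul_poissonMeasure {F : ℕ → ℝ}
    (hF : Integrable (fun n ↦ F (n + 1)) (poissonMeasure α)) :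
    ∫ n, n * F n ∂poissonMeasure α = α * ∫ n, F (n + 1) ∂poissonMeasure α := by
  have hasSum_shift := (hasSum_nat_add_iff' 1).2
    (hasSum_integral_poissonMeasure (integrable_natCast_mul_poissonMeasure hF))
  simp only [Finset.sum_range_one, Nat.cast_zero, zero_mul, smul_zero, sub_zero] at hasSum_shift
  refine hasSum_shift.unique
    (((hasSum_integral_poissonMeasure hF).mul_left (α : ℝ)).congr_fun fun n ↦ ?_)
  rw [Nat.factorial_succ, smul_eq_mul, smul_eq_mul]
  push_cast
  field

/-- The law of `(X - α) / √α` for a Poisson variable `X` of mean `α`. For `α = 0` the division by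
zero makes it the Dirac mass at `0`. -/
noncomputable def standardizedPoisson (α : ℝ≥0) : Measure ℝ :=
  (poissonMeasure α).map fun n : ℕ ↦ (n - α) / √α

instance : IsProbabilityMeasure (standardizedPoisson α) :=
  Measure.isProbabilityMeasure_map .of_discrete

lemma integral_standardizedPoisson {f : ℝ → ℝ}
    (hf : AEStronglyMeasurable f (standardizedPoisson α)) :
    ∫ x, f x ∂standardizedPoisson α = ∫ n : ℕ, f ((n - α) / √α) ∂poissonMeasure α :=
  integral_map .of_discrete hf

lemma integrable_standardizedPoisson_iff {f : ℝ → ℝ}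
    (hf : AEStronglyMeasurable f (standardizedPoisson α)) :
    Integrable f (standardizedPoisson α) ↔
      Integrable (fun n : ℕ ↦ f ((n - α) / √α)) (poissonMeasure α) :=
  integrable_map_measure hf .of_discrete

section Stein

variable {f : ℝ → ℝ} (hf : Integrable f (standardizedPoisson α))
  (hf_shift : Integrable (fun x ↦ f (x + (√α)⁻¹)) (standardizedPoisson α))
include hf hf_shift

lemma integrable_id_mul_standardizedPoisson :
    Integrable (fun x ↦ x * f x) (standardizedPoisson α) := by
  have aestronglyMeasurable := aestronglyMeasurable_id.mul hf.aestronglyMeasurable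
  rw [integrable_standardizedPoisson_iff hf.aestronglyMeasurable] at hf
  rw [integrable_standardizedPoisson_iff hf_shift.aestronglyMeasurable] at hf_shift
  have integrable_natCast_mul := integrable_natCast_mul_poissonMeasure (α := α)
    (F := fun n ↦ f ((n - α) / √α)) (hf_shift.congr (ae_of_all _ fun n ↦ by push_cast; ring_nf))
  refine (integrable_standardizedPoisson_iff aestronglyMeasurable).2 <|
    ((integrable_natCast_mul.sub (hf.const_mul α)).const_mul (√α)⁻¹).congr
      (ae_of_all _ fun n ↦ ?_)
  simp only [Pi.sub_apply, Pi.mul_apply, id_eq]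
  ring

lemma integral_id_mul_standardizedPoisson :
    ∫ x, x * f x ∂standardizedPoisson α =
      √α * ∫ x, (f (x + (√α)⁻¹) - f x) ∂standardizedPoisson α := by
  have aestronglyMeasurable := (integrable_id_mul_standardizedPoisson hf hf_shift).1
  rw [integral_sub hf_shift hf, integral_standardizedPoisson aestronglyMeasurable,
    integral_standardizedPoisson hf.1, integral_standardizedPoisson hf_shift.1]
  rw [integrable_standardizedPoisson_iff hf.1] at hf
  rw [integrable_standardizedPoisson_iff hf_shift.1] at hf_shift
  let F (n : ℕ) : ℝ := f ((n - α) / √α)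
  have F_succ (n : ℕ) : f ((n - α) / √α + (√α)⁻¹) = F (n + 1) := by
    simp only [F, Nat.cast_succ]
    ring_nf
  simp only [F_succ] at hf_shift ⊢
  calc ∫ n : ℕ, (n - α) / √α * F n ∂poissonMeasure α
    _ = ∫ n : ℕ, (√α)⁻¹ * (n * F n - α * F n) ∂poissonMeasure α := by
      congr with n; ring
    _ = (√α)⁻¹ * (α * ∫ n, F (n + 1) ∂poissonMeasure α - α * ∫ n, F n ∂poissonMeasure α) := by
      rw [integral_const_mul, integral_sub (integrable_natCast_mul_poissonMeasure hf_shift)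
        (hf.const_mul _), integral_natCast_mul_poissonMeasure hf_shift, integral_const_mul]
    _ = √α * (∫ n, F (n + 1) ∂poissonMeasure α - ∫ n, F n ∂poissonMeasure α) := by
      rw [← mul_sub, ← mul_assoc, inv_mul_eq_div, Real.div_sqrt]

end Stein

lemma integrable_id_standardizedPoisson (α : ℝ≥0) :
    Integrable (fun x ↦ x) (standardizedPoisson α) := by
  simpa using integrable_id_mul_standardizedPoisson (α := α) (f := fun _ ↦ 1)
    (integrable_const 1) (integrable_const 1)

lemma abs_integral_sum_iteratedDeriv_sub_id_mul_le (n : ℕ) {f : ℝ → ℝ} {D : ℝ}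
    (hf : HasBoundedDerivs (n + 1) f) (hD : ∀ x, |iteratedDeriv (n + 1) f x| ≤ D) (hα : 0 < α) :
    |∫ x, (∑ k ∈ Finset.range n, (√α)⁻¹ ^ k / (k + 1).factorial * iteratedDeriv (k + 1) f x -
      x * f x) ∂standardizedPoisson α| ≤ D * ((√α)⁻¹ ^ n / (n + 1).factorial) := by
  have integrable_iteratedDeriv (k : ℕ) (hk : k ≤ n + 1) :=
    hf.integrable_iteratedDeriv hk (standardizedPoisson α)
  have integrable_sum : Integrable (fun x ↦ ∑ k ∈ Finset.range n,
      (√α)⁻¹ ^ k / (k + 1).factorial * iteratedDeriv (k + 1) f x) (standardizedPoisson α) :=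
    integrable_finsetSum _ fun k hk ↦
      (integrable_iteratedDeriv (k + 1) (by rw [Finset.mem_range] at hk; lia)).const_mul _
  have integrable_f : Integrable f (standardizedPoisson α) := by
    simpa using integrable_iteratedDeriv 0 (by lia)
  have integrable_shift : Integrable (fun x ↦ f (x + (√α)⁻¹)) (standardizedPoisson α) := by
    obtain ⟨B, hB⟩ := hf.bounded 0 (by lia)
    have differentiable_f : Differentiable ℝ f := by simpa using hf.differentiable 0 (by lia)
    exact .of_bound (differentiable_f.continuous.comp (by fun_prop)).aestronglyMeasurable B
      (ae_of_all _ fun x ↦ by simpa using hB (x + (√α)⁻¹))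
  have integrable_slope : Integrable (fun x ↦ √α * (f (x + (√α)⁻¹) - f x))
      (standardizedPoisson α) := (integrable_shift.sub integrable_f).const_mul _
  have taylor (x : ℝ) := abs_sum_iteratedDeriv_sub_slope_le n
    (fun k hk ↦ hf.differentiable k (by lia)) hD x (t := (√α)⁻¹) (by positivity)
  rw [integral_sub integrable_sum (integrable_id_mul_standardizedPoisson integrable_f
    integrable_shift), integral_id_mul_standardizedPoisson integrable_f integrable_shift,
    ← integral_const_mul, ← integral_sub integrable_sum integrable_slope]
  simp only [inv_inv, ← Real.norm_eq_abs] at taylor ⊢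
  exact (norm_integral_le_of_norm_le_const (ae_of_all _ taylor)).trans_eq (by simp)

namespace IsSteinSolution

variable {v f : ℝ → ℝ} {D : ℝ}

lemma abs_integral_standardizedPoisson_le (hf : IsSteinSolution v f) (hf₂ : HasBoundedDerivs 2 f)
    (hD : ∀ x, |iteratedDeriv 2 f x| ≤ D) (hα : 0 < α) :
    |∫ x, v x ∂standardizedPoisson α| ≤ D / 2 * (√α)⁻¹ := by
  simpa [hf.deriv_eq, div_mul_eq_mul_div, mul_div_assoc] using
    abs_integral_sum_iteratedDeriv_sub_id_mul_le 1 hf₂ hD hα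

lemma abs_integral_add_standardizedPoisson_le (hf : IsSteinSolution v f)
    (hf₃ : HasBoundedDerivs 3 f) (hv : Integrable v (standardizedPoisson α))
    (hD : ∀ x, |iteratedDeriv 3 f x| ≤ D) (hα : 0 < α) :
    |∫ x, v x ∂standardizedPoisson α +
      (√α)⁻¹ / 2 * ∫ x, iteratedDeriv 2 f x ∂standardizedPoisson α| ≤ D / 6 * (√α)⁻¹ ^ 2 := by
  rw [← integral_const_mul, ← integral_add hv
    ((hf₃.integrable_iteratedDeriv (by simp) _).const_mul _)]
  convert abs_integral_sum_iteratedDeriv_sub_id_mul_le 2 hf₃ hD hα using 1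
  · congr with x
    rw [Finset.sum_range_succ, Finset.sum_range_one]
    simp only [zero_add, Nat.factorial_one, Nat.cast_one, iteratedDeriv_one, hf.deriv_eq,
      Nat.reduceAdd, Nat.factorial_two, Nat.cast_ofNat]
    ring
  · rw [show Nat.factorial (2 + 1) = 6 from rfl]
    push_cast
    ring

end IsSteinSolution

end Poisson

section Conclusion

variable {v : ℝ → ℝ} {K : ℝ}

lemma exists_isSteinSolution_sub_integral (hv : Differentiable ℝ v) (hK : ∀ x, |deriv v x| ≤ K) :
    ∃ f, IsSteinSolution (fun x ↦ v x - ∫ y, v y ∂γ) f := by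
  have integrable_v : Integrable v γ :=
    integrable_of_abs_deriv_le (by simpa using integrable_pow_gaussianReal 0 1 1) hv hK
  refine exists_isSteinSolution (hv.continuous.sub continuous_const)
    (integrable_v.sub (integrable_const _)) ?_
  rw [integral_sub integrable_v (integrable_const _)]
  simp

lemma exists_abs_integral_standardizedPoisson_sub_le (hv : Differentiable ℝ v)
    (hK : ∀ x, |deriv v x| ≤ K) : ∃ C, ∀ α : ℝ≥0, 0 < α →
      |∫ x, v x ∂standardizedPoisson α - ∫ x, v x ∂γ| ≤ C * (√α)⁻¹ := by
  obtain ⟨f, hf⟩ := exists_isSteinSolution_sub_integral hv hK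
  have hf₂ : HasBoundedDerivs 2 f := hf.hasBoundedDerivs_two (hv.sub_const _) (by simpa using hK)
  obtain ⟨D, hD⟩ := hf₂.bounded 2 le_rfl
  refine ⟨D / 2, fun α hα ↦ ?_⟩
  have integrable_v := integrable_of_abs_deriv_le (integrable_id_standardizedPoisson α) hv hK
  simpa [integral_sub integrable_v] using hf.abs_integral_standardizedPoisson_le hf₂ hD hα

lemma IsSteinSolution.integral_iteratedDeriv_two_of_sub_const {f : ℝ → ℝ} {c : ℝ}
    (hf : IsSteinSolution (fun x ↦ v x - c) f) (hf₂ : HasBoundedDerivs 2 f) :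
    ∫ x, iteratedDeriv 2 f x ∂γ = -3⁻¹ * ∫ x, v x * (x ^ 3 - 3 * x) ∂γ := by
  have integrable_hermite : Integrable (fun x ↦ x ^ 3 - 3 * x) γ :=
    (integrable_pow_gaussianReal 0 1 3).sub
      (by simpa using (integrable_pow_gaussianReal 0 1 1).const_mul 3)
  have integral_hermite : ∫ x, (x ^ 3 - 3 * x) ∂γ = 0 :=
    integral_gaussianReal_eq_zero_of_odd 1 fun x ↦ by ring
  calc ∫ x, iteratedDeriv 2 f x ∂γ
    _ = -3⁻¹ * (∫ x, (v x - c) * (x ^ 3 - 3 * x) ∂γ + c * ∫ x, (x ^ 3 - 3 * x) ∂γ) := by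
      rw [hf.integral_iteratedDeriv_two hf₂, integral_hermite, mul_zero, add_zero]
    _ = -3⁻¹ * ∫ x, v x * (x ^ 3 - 3 * x) ∂γ := by
      rw [← integral_const_mul, ← integral_add (hf.integrable_mul_hermite hf₂)
        (integrable_hermite.const_mul c)]
      congr with x
      ring

lemma exists_abs_integral_standardizedPoisson_sub_edgeworth_le {K' : ℝ} (hv : Differentiable ℝ v)
    (hv' : Differentiable ℝ (deriv v)) (hK : ∀ x, |deriv v x| ≤ K)
    (hK' : ∀ x, |deriv (deriv v) x| ≤ K') : ∃ C, ∀ α : ℝ≥0, 0 < α →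
      |∫ x, v x ∂standardizedPoisson α - ∫ x, v x ∂γ -
        (6 * √α)⁻¹ * ∫ x, v x * (x ^ 3 - 3 * x) ∂γ| ≤ C * (α : ℝ)⁻¹ := by
  obtain ⟨f, hf⟩ := exists_isSteinSolution_sub_integral hv hK
  have hf₃ : HasBoundedDerivs 3 f := hf.hasBoundedDerivs_three (hv.sub_const _)
    (by simpa using hv') (by simpa using hK) (by simpa using hK')
  obtain ⟨D, hD⟩ := hf₃.bounded 3 le_rfl
  obtain ⟨C, hC⟩ := exists_abs_integral_standardizedPoisson_sub_le
    (hf₃.differentiable 2 (by simp)) (by simpa only [iteratedDeriv_succ] using hD)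
  refine ⟨D / 6 + C / 2, fun α hα ↦ ?_⟩
  have integrable_v := integrable_of_abs_deriv_le (integrable_id_standardizedPoisson α) hv hK
  have second_order := hf.abs_integral_add_standardizedPoisson_le hf₃
    (integrable_v.sub (integrable_const _)) hD hα
  rw [integral_sub integrable_v (integrable_const _), integral_const, probReal_univ,
    one_smul] at second_order
  calc
    _ = |∫ x, v x ∂standardizedPoisson α - ∫ x, v x ∂γ +
        (√α)⁻¹ / 2 * ∫ x, iteratedDeriv 2 f x ∂standardizedPoisson α -
        (√α)⁻¹ / 2 * (∫ x, iteratedDeriv 2 f x ∂standardizedPoisson α -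
          ∫ x, iteratedDeriv 2 f x ∂γ)| := by
      rw [hf.integral_iteratedDeriv_two_of_sub_const (hf₃.mono (by simp))]
      ring_nf
    _ ≤ D / 6 * (√α)⁻¹ ^ 2 + (√α)⁻¹ / 2 * (C * (√α)⁻¹) := by
      refine (abs_sub _ _).trans (add_le_add second_order ?_)
      rw [abs_mul, abs_of_nonneg (by positivity)]
      gcongr
      exact hC α hα
    _ = (D / 6 + C / 2) * (α : ℝ)⁻¹ := by
      have sq_inv_sqrt : (√α)⁻¹ ^ 2 = (α : ℝ)⁻¹ := by rw [inv_pow, Real.sq_sqrt α.coe_nonneg]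
      rw [← sq_inv_sqrt]
      ring

theorem poisson_normal_approx_order_one_general (h : ℝ → ℝ)
    (hdiff : Differentiable ℝ h) (hdiff2 : Differentiable ℝ (deriv h))
    (hbdd1 : ∃ M : ℝ, ∀ x : ℝ, |deriv h x| ≤ M)
    (hbdd2 : ∃ M : ℝ, ∀ x : ℝ, |deriv (deriv h) x| ≤ M) :
    ∃ C > (0 : ℝ), ∀ α > (0 : ℝ),
      |(∑' n : ℕ, Real.exp (-α) * α ^ n / (n.factorial : ℝ) * h ((n - α) / √α)) -
        ∫ x, h x ∂γ - (6 * √α)⁻¹ * ∫ x, h x * (x ^ 3 - 3 * x) ∂γ| ≤ C * α⁻¹ := by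
  obtain ⟨K, hK⟩ := hbdd1
  obtain ⟨K', hK'⟩ := hbdd2
  obtain ⟨C, hC⟩ := exists_abs_integral_standardizedPoisson_sub_edgeworth_le hdiff hdiff2 hK hK'
  refine ⟨max 1 C, by positivity, fun α hα ↦ ?_⟩
  lift α to ℝ≥0 using hα.le
  have edgeworth := hC α hα
  rw [integral_standardizedPoisson hdiff.continuous.aestronglyMeasurable,
    integral_poissonMeasure] at edgeworth
  exact edgeworth.trans (by gcongr; exact le_max_right _ _)

end Conclusion

/-- Normal approximation of a standardized Poisson expectation for an even, twice
differentiable test function with bounded first and second derivatives: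
`E[h((X_α − α)/√α)] = E[h(Z)] + O(α^{-1})` as `α → ∞`, where `X_α ∼ Po(α)` and
`Z ∼ N(0,1)`. -/
theorem poisson_normal_approx_order_one (h : ℝ → ℝ)
    (heven : ∀ x : ℝ, h x = h (-x))
    (hdiff : Differentiable ℝ h) (hdiff2 : Differentiable ℝ (deriv h))
    (hbdd1 : ∃ M : ℝ, ∀ x : ℝ, |deriv h x| ≤ M)
    (hbdd2 : ∃ M : ℝ, ∀ x : ℝ, |deriv (deriv h) x| ≤ M) :
    ∃ C > (0 : ℝ), ∃ A > (0 : ℝ), ∀ α : ℝ, α ≥ A →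
      |(∑' n : ℕ, Real.exp (-α) * α ^ n / (n.factorial : ℝ) *
          h (((n : ℝ) - α) / Real.sqrt α)) -
        ∫ z : ℝ, h z * ((2 * Real.pi) ^ (-(1 : ℝ) / 2) * Real.exp (-z ^ 2 / 2))|
        ≤ C * α⁻¹ := by
  obtain ⟨C, hC, hbound⟩ := poisson_normal_approx_order_one_general h hdiff hdiff2 hbdd1 hbdd2
  refine ⟨C, hC, 1, one_pos, fun α hα ↦ ?_⟩
  have edgeworth_term : ∫ x, h x * (x ^ 3 - 3 * x) ∂γ = 0 :=
    integral_gaussianReal_eq_zero_of_odd 1 fun x ↦ by rw [← heven]; ring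
  simpa only [edgeworth_term, mul_zero, sub_zero, integral_gaussianReal_zero_one] using
    hbound α (zero_lt_one.trans_le hα)
end
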